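/- arXiv:1507.04454 — 3 statements merged into one kernel-verified Lean document; each statement's English description precedes it below -/
import Mathlib

section
/- For every n ≥ 2, the dimension over ℚ of the space Inv(sl₂^{⊗n}) of invariant tensors of the n-fold tensor power of the adjoint representation of sl₂ equals the Riordan number Rₙ. -/
/- The dimension of the space Inv(sl₂^{⊗n}) of invariant tensors of the n-fold
   tensor power of the adjoint representation of sl₂ (traceless 2×2 matrices
   over ℚ) equals the Riordan number Rₙ, for every n ≥ 2.  The Riordan numbers
   are quantified via their defining recurrence. -/

open scoped TensorProduct

set_option synthInstance.maxHeartbeats 1000000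
set_option maxHeartbeats 1000000

noncomputable section

abbrev sl2 : Type := ↥(LieAlgebra.SpecialLinear.sl (Fin 2) ℚ)

/-- The n-fold tensor power sl₂^{⊗n}. -/
abbrev TP (n : ℕ) : Type := ⨂[ℚ] (_ : Fin n), sl2

/-- The adjoint action of `x ∈ sl₂` on `sl₂^{⊗n}`, extended as a derivation:
`x · (m₁ ⊗ ⋯ ⊗ mₙ) = Σᵢ m₁ ⊗ ⋯ ⊗ [x, mᵢ] ⊗ ⋯ ⊗ mₙ`. -/
def actOn (n : ℕ) (x : sl2) : TP n →ₗ[ℚ] TP n :=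
  ∑ i : Fin n,
    PiTensorProduct.map (fun j => if j = i then LieAlgebra.ad ℚ sl2 x else LinearMap.id)

/-- The space of invariant tensors of `sl₂^{⊗n}`. -/
def Invariants (n : ℕ) : Submodule ℚ (TP n) :=
  ⨅ x : sl2, LinearMap.ker (actOn n x)

/-!
The invariants of a finite-dimensional `sl₂`-module are its highest weight vectors of weight `0`.
Since `e` maps the weight space `0` onto the weight space `2`, their dimension is the difference of
the dimensions of these two weight spaces. The weights of `sl₂` being `2, 0, -2`, the weight space
`2k` of `sl₂^{⊗n}` has dimension the coefficient of `x ^ k` in `(x⁻¹ + 1 + x) ^ n`. Differentiating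
this power relates neighbouring coefficients, and the Riordan recurrence for the difference of the
coefficients at `0` and `1` follows.
-/

open Module LieModule

section Sl2Weights

variable {R L M : Type*} [CommRing R] [LieRing L] [LieAlgebra R L]
  [AddCommGroup M] [Module R M] [LieRingModule L M] [LieModule R L M]
  {h e f : L} {m : M} {μ : R}

theorem lie_e_mem_eigenspace (t : IsSl2Triple h e f) (hm : m ∈ (toEnd R L M h).eigenspace μ) :
    ⁅e, m⁆ ∈ (toEnd R L M h).eigenspace (μ + 2) := by
  rw [End.mem_eigenspace_iff, toEnd_apply_apply] at hm ⊢
  rw [leibniz_lie, t.lie_h_e_smul R, hm, smul_lie, lie_smul, add_smul, add_comm]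

theorem lie_f_mem_eigenspace (t : IsSl2Triple h e f) (hm : m ∈ (toEnd R L M h).eigenspace μ) :
    ⁅f, m⁆ ∈ (toEnd R L M h).eigenspace (μ - 2) := by
  rw [End.mem_eigenspace_iff, toEnd_apply_apply] at hm ⊢
  rw [leibniz_lie, t.lie_lie_smul_f R, hm, neg_lie, smul_lie, lie_smul, sub_smul, neg_add_eq_sub]

theorem lie_f_pow_succ_toEnd_e (t : IsSl2Triple h e f) (hm : ⁅h, m⁆ = μ • m) (n : ℕ) :
    ⁅f, (toEnd R L M e ^ (n + 1)) m⁆ =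
      (toEnd R L M e ^ (n + 1)) ⁅f, m⁆ - ((n + 1) * (μ + n)) • (toEnd R L M e ^ n) m := by
  have lie_f_lie_e (v : M) : ⁅f, ⁅e, v⁆⁆ = ⁅e, ⁅f, v⁆⁆ - ⁅h, v⁆ := by
    rw [← t.lie_e_f, lie_lie, sub_sub_cancel]
  induction n with
  | zero => simp [lie_f_lie_e, hm]
  | succ n ih =>
    rw [← IsSl2Triple.lie_e_pow_toEnd_e (m := m), lie_f_lie_e, ih, t.lie_h_pow_toEnd_e hm,
      lie_sub, lie_smul, IsSl2Triple.lie_e_pow_toEnd_e, IsSl2Triple.lie_e_pow_toEnd_e]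
    push_cast
    module

end Sl2Weights

section Sl2FiniteDimensional

variable {K L M : Type*} [Field K] [CharZero K] [LieRing L] [LieAlgebra K L]
  [AddCommGroup M] [Module K M] [FiniteDimensional K M] [LieRingModule L M] [LieModule K L M]
  {h e f : L} {m : M} {μ : K}

theorem exists_pow_toEnd_e_eq_zero (t : IsSl2Triple h e f) (hm : ⁅h, m⁆ = μ • m) :
    ∃ n : ℕ, (toEnd K L M e ^ n) m = 0 := by
  by_contra! hne
  have hasEigenvalue (n : ℕ) : (toEnd K L M h).HasEigenvalue (μ + 2 * n) :=
    End.hasEigenvalue_of_hasEigenvector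
      ⟨End.mem_eigenspace_iff.mpr (t.lie_h_pow_toEnd_e hm n), hne n⟩
  have injective : Function.Injective fun n : ℕ ↦ μ + 2 * (n : K) := fun a b hab ↦ by
    simpa using hab
  exact Set.infinite_of_injective_forall_mem injective hasEigenvalue
    (toEnd K L M h).finite_hasEigenvalue

theorem eq_zero_of_lie_e_lie_f_eq_zero (t : IsSl2Triple h e f) (hμ : ∀ n : ℕ, μ + n ≠ 0)
    (hm : ⁅h, m⁆ = μ • m) (hef : ⁅e, ⁅f, m⁆⁆ = 0) : m = 0 := by
  by_contra hne
  obtain ⟨n, hn, hn_succ⟩ :=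
    Nat.exists_not_and_succ_of_not_zero_of_exists hne (exists_pow_toEnd_e_eq_zero t hm)
  have descend := lie_f_pow_succ_toEnd_e t hm n
  rw [hn_succ, lie_zero, pow_succ, End.mul_apply, toEnd_apply_apply, hef, map_zero, zero_sub,
    zero_eq_neg, smul_eq_zero, mul_eq_zero] at descend
  exact descend.elim (·.elim n.cast_add_one_ne_zero (hμ n)) hn

theorem map_toEnd_e_eigenspace (t : IsSl2Triple h e f) (hμ : ∀ n : ℕ, μ + 2 + n ≠ 0) :
    ((toEnd K L M h).eigenspace μ).map (toEnd K L M e) =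
      (toEnd K L M h).eigenspace (μ + 2) := by
  apply le_antisymm
  · rintro _ ⟨v, hv, rfl⟩
    exact lie_e_mem_eigenspace t hv
  intro w hw
  have lie_f_mem {v : M} (hv : v ∈ (toEnd K L M h).eigenspace (μ + 2)) :
      ⁅f, v⁆ ∈ (toEnd K L M h).eigenspace μ := by
    simpa using lie_f_mem_eigenspace t hv
  let ef : End K ((toEnd K L M h).eigenspace (μ + 2)) :=
    (toEnd K L M e * toEnd K L M f).restrict fun v hv ↦ lie_e_mem_eigenspace t (lie_f_mem hv)
  have ef_injective : Function.Injective ef := by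
    rw [← LinearMap.ker_eq_bot, LinearMap.ker_eq_bot']
    rintro ⟨v, hv⟩ hef
    exact Subtype.ext <| eq_zero_of_lie_e_lie_f_eq_zero t hμ (End.mem_eigenspace_iff.mp hv)
      (congrArg Subtype.val hef)
  obtain ⟨v, hv⟩ := LinearMap.surjective_of_injective ef_injective ⟨w, hw⟩
  exact ⟨⁅f, v.1⁆, lie_f_mem v.2, congrArg Subtype.val hv⟩

theorem finrank_eigenspace_inf_ker_toEnd_e_add (t : IsSl2Triple h e f)
    (hμ : ∀ n : ℕ, μ + 2 + n ≠ 0) :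
    finrank K ↥((toEnd K L M h).eigenspace μ ⊓ LinearMap.ker (toEnd K L M e)) +
        finrank K ((toEnd K L M h).eigenspace (μ + 2)) =
      finrank K ((toEnd K L M h).eigenspace μ) := by
  rw [← LinearMap.finrank_range_add_finrank_ker
      ((toEnd K L M e).domRestrict ((toEnd K L M h).eigenspace μ)),
    LinearMap.range_domRestrict, map_toEnd_e_eigenspace t hμ, LinearMap.ker_domRestrict,
    ← Submodule.map_comap_subtype, Submodule.finrank_map_subtype_eq, add_comm]

theorem lie_f_eq_zero_of_lie_e_eq_zero (t : IsSl2Triple h e f)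
    (hm : m ∈ (toEnd K L M h).eigenspace 0) (he : ⁅e, m⁆ = 0) : ⁅f, m⁆ = 0 := by
  rcases eq_or_ne m 0 with rfl | hne
  · exact lie_zero f
  have primitive : t.HasPrimitiveVectorWith m (0 : K) :=
    ⟨hne, End.mem_eigenspace_iff.mp hm, he⟩
  simpa using primitive.pow_toEnd_f_eq_zero_of_eq_nat Nat.cast_zero.symm

theorem maxTrivSubmodule_eq_eigenspace_inf_ker (t : IsSl2Triple h e f)
    (ht : t.toLieSubalgebra K = ⊤) :
    (maxTrivSubmodule K L M).toSubmodule =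
      (toEnd K L M h).eigenspace 0 ⊓ LinearMap.ker (toEnd K L M e) := by
  ext m
  simp only [LieSubmodule.mem_toSubmodule, mem_maxTrivSubmodule, Submodule.mem_inf,
    LinearMap.mem_ker, toEnd_apply_apply]
  refine ⟨fun hm ↦ ⟨by simp [hm h], hm e⟩, fun ⟨hm, he⟩ x ↦ ?_⟩
  have hh : ⁅h, m⁆ = 0 := by simpa using hm
  have hf : ⁅f, m⁆ = 0 := lie_f_eq_zero_of_lie_e_eq_zero t hm he
  obtain ⟨a, b, c, rfl⟩ := IsSl2Triple.mem_toLieSubalgebra_iff.mp (ht ▸ LieSubalgebra.mem_top x)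
  simp [t.lie_e_f, hh, he, hf]

theorem finrank_maxTrivSubmodule_add_finrank_eigenspace_two (t : IsSl2Triple h e f)
    (ht : t.toLieSubalgebra K = ⊤) :
    finrank K (maxTrivSubmodule K L M) + finrank K ((toEnd K L M h).eigenspace 2) =
      finrank K ((toEnd K L M h).eigenspace 0) := by
  have hweight (n : ℕ) : (0 + 2 + n : K) ≠ 0 := by norm_cast; omega
  have key := finrank_eigenspace_inf_ker_toEnd_e_add (M := M) t hweight
  rwa [zero_add, ← maxTrivSubmodule_eq_eigenspace_inf_ker t ht] at key

end Sl2FiniteDimensional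

section Tensor

variable {R ι : Type*} [CommRing R] [DecidableEq ι]
  {M : ι → Type*} [∀ i, AddCommGroup (M i)] [∀ i, Module R (M i)]

/-- The endomorphism `id ⊗ ⋯ ⊗ u ⊗ ⋯ ⊗ id` of a tensor product, with `u` in the `i`-th place. It is
the partial linear map of `PiTensorProduct.mapMultilinear` at the identity, which makes linearity in
`u` automatic. -/
def tensorFactorEnd (i : ι) : End R (M i) →ₗ[R] End R (⨂[R] i, M i) :=
  (PiTensorProduct.mapMultilinear R M M).toLinearMap 1 i

theorem tensorFactorEnd_apply (i : ι) (u : End R (M i)) :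
    tensorFactorEnd i u = PiTensorProduct.mapMonoidHom (Pi.mulSingle i u) :=
  rfl

theorem tensorFactorEnd_mul (i : ι) (u v : End R (M i)) :
    tensorFactorEnd i (u * v) = tensorFactorEnd i u * tensorFactorEnd i v := by
  simp only [tensorFactorEnd_apply, Pi.mulSingle_mul, map_mul]

theorem tensorFactorEnd_tprod (i : ι) (u : End R (M i)) (m : ∀ i, M i) :
    tensorFactorEnd i u (PiTensorProduct.tprod R m) =
      PiTensorProduct.tprod R (Function.update m i (u (m i))) := by
  rw [tensorFactorEnd_apply, PiTensorProduct.mapMonoidHom_apply, PiTensorProduct.map_tprod]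
  congr 1 with j
  rcases eq_or_ne j i with rfl | hj
  · simp
  · simp [hj]

theorem tensorFactorEnd_commute {i j : ι} (hij : i ≠ j) (u : End R (M i)) (v : End R (M j)) :
    Commute (tensorFactorEnd i u) (tensorFactorEnd j v) :=
  (Pi.mulSingle_commute (f := fun i ↦ M i →ₗ[R] M i) hij u v).map PiTensorProduct.mapMonoidHom

variable {L : Type*} [LieRing L] [LieAlgebra R L] [Fintype ι]
  [∀ i, LieRingModule L (M i)] [∀ i, LieModule R L (M i)]

variable (R M L) in
/-- The action of a Lie algebra on a finite tensor product of its modules, extended as a derivation: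
`x` acts on each factor in turn. -/
def tensorAction : L →ₗ[R] End R (⨂[R] i, M i) :=
  ∑ i, tensorFactorEnd i ∘ₗ (toEnd R L (M i) : L →ₗ[R] End R (M i))

theorem tensorAction_apply (x : L) :
    tensorAction R M L x = ∑ i, tensorFactorEnd i (toEnd R L (M i) x) := by
  simp [tensorAction]

theorem tensorAction_lie (x y : L) :
    tensorAction R M L ⁅x, y⁆ =
      tensorAction R M L x * tensorAction R M L y -
        tensorAction R M L y * tensorAction R M L x := by
  have toEnd_lie (i : ι) : toEnd R L (M i) ⁅x, y⁆ =
      toEnd R L (M i) x * toEnd R L (M i) y - toEnd R L (M i) y * toEnd R L (M i) x := by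
    ext m
    exact lie_lie x y m
  simp only [tensorAction_apply, toEnd_lie, map_sub, tensorFactorEnd_mul, Finset.sum_mul_sum]
  rw [Finset.sum_comm (f := fun i j ↦ tensorFactorEnd i (toEnd R L (M i) y) * _),
    ← Finset.sum_sub_distrib]
  refine Finset.sum_congr rfl fun i _ ↦ ?_
  rw [← Finset.sum_sub_distrib, Finset.sum_eq_single i (fun j _ hj ↦ ?_) (by simp)]
  exact sub_eq_zero.mpr (tensorFactorEnd_commute hj.symm _ _)

instance tensorLieRingModule : LieRingModule L (⨂[R] i, M i) where
  bracket x m := tensorAction R M L x m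
  add_lie x y m := by simp only [map_add, LinearMap.add_apply]
  lie_add x := map_add (tensorAction R M L x)
  leibniz_lie x y m := by
    simp only [tensorAction_lie, LinearMap.sub_apply, End.mul_apply, sub_add_cancel]

instance tensorLieModule : LieModule R L (⨂[R] i, M i) where
  smul_lie c x m := congrArg (· m) (map_smul (tensorAction R M L) c x)
  lie_smul c x := map_smul (tensorAction R M L x) c

theorem lie_tprod (x : L) (m : ∀ i, M i) :
    ⁅x, PiTensorProduct.tprod R m⁆ =
      ∑ i, PiTensorProduct.tprod R (Function.update m i ⁅x, m i⁆) := by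
  change tensorAction R M L x _ = _
  simp only [tensorAction_apply, LinearMap.sum_apply, tensorFactorEnd_tprod, toEnd_apply_apply]

theorem lie_tprod_of_lie_eq_smul {x : L} {m : ∀ i, M i} {w : ι → R}
    (hm : ∀ i, ⁅x, m i⁆ = w i • m i) :
    ⁅x, PiTensorProduct.tprod R m⁆ = (∑ i, w i) • PiTensorProduct.tprod R m := by
  simp only [lie_tprod, hm, MultilinearMap.map_update_smul, Function.update_eq_self,
    Finset.sum_smul]

end Tensor

section DiagonalEnd

variable {R V κ : Type*} [CommRing R] [AddCommGroup V] [Module R V]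
  {T : End R V} {w : κ → R}

theorem repr_apply_of_apply_eq_smul (b : Basis κ R V) (hT : ∀ i, T (b i) = w i • b i) (v : V)
    (i : κ) : b.repr (T v) i = w i * b.repr v i := by
  classical
  have key : b.coord i ∘ₗ T = w i • b.coord i := b.ext fun j ↦ by
    rcases eq_or_ne j i with rfl | hj
    · simp [hT]
    · simp [hT, hj]
  exact LinearMap.congr_fun key v

variable [IsDomain R]

theorem eigenspace_eq_span (b : Basis κ R V) (hT : ∀ i, T (b i) = w i • b i) (μ : R) :
    T.eigenspace μ = Submodule.span R (b '' {i | w i = μ}) := by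
  ext v
  have coordwise (i : κ) :
      b.repr (T v) i = b.repr (μ • v) i ↔ (b.repr v i ≠ 0 → w i = μ) := by
    rw [repr_apply_of_apply_eq_smul b hT, map_smul, Finsupp.smul_apply, smul_eq_mul,
      mul_eq_mul_right_iff]
    tauto
  rw [End.mem_eigenspace_iff, Basis.mem_span_image, b.ext_elem_iff]
  simp only [coordwise, Set.subset_def, Finset.mem_coe, Finsupp.mem_support_iff, Set.mem_ofPred_eq]

theorem finrank_eigenspace_eq_card [DecidableEq R] [Fintype κ] (b : Basis κ R V)
    (hT : ∀ i, T (b i) = w i • b i) (μ : R) :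
    finrank R (T.eigenspace μ) = Finset.card {i | w i = μ} := by
  have independent : LinearIndependent R fun i : {i | w i = μ} ↦ b i :=
    b.linearIndependent.comp _ Subtype.val_injective
  rw [eigenspace_eq_span b hT, Set.image_eq_range, finrank_span_eq_card independent]
  exact Fintype.card_subtype _

end DiagonalEnd

section Trinomial

/-- The coefficient of `x ^ k` in the Laurent polynomial `(x⁻¹ + 1 + x) ^ n`, given by the
generalised Pascal rule. -/
def trinomialCoeff : ℕ → ℤ → ℕ
  | 0, k => if k = 0 then 1 else 0
  | n + 1, k => trinomialCoeff n (k - 1) + trinomialCoeff n k + trinomialCoeff n (k + 1)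

/-- The exponents of `x + 1 + x⁻¹`. Their doubles are the weights of `e`, `h`, `f` in the adjoint
representation of `sl₂`. -/
def trinomialStep : Fin 3 → ℤ :=
  ![1, 0, -1]

theorem card_sum_trinomialStep_eq (n : ℕ) (k : ℤ) :
    Finset.card {s : Fin n → Fin 3 | ∑ i, trinomialStep (s i) = k} = trinomialCoeff n k := by
  induction n generalizing k with
  | zero =>
    rcases eq_or_ne k 0 with rfl | hk
    · simp [trinomialCoeff]
    · simp [trinomialCoeff, hk, hk.symm]
  | succ n ih =>
    have split_first (a : Fin 3) (s : Fin n → Fin 3) :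
        ∑ i, trinomialStep ((Fin.cons a s : Fin (n + 1) → Fin 3) i) = k ↔
          ∑ i, trinomialStep (s i) = k - trinomialStep a := by
      simp [Fin.sum_univ_succ, eq_sub_iff_add_eq']
    simp only [Finset.card_filter] at ih ⊢
    rw [← (Fin.consEquiv fun _ ↦ Fin 3).sum_comp, Fintype.sum_prod_type, Fin.sum_univ_three]
    simp only [Fin.consEquiv_apply, split_first, ih]
    simp [trinomialStep, trinomialCoeff]

-- With `P = x⁻¹ + 1 + x` and `D = x d/dx`, this is the coefficient of `x ^ k` in
-- `P * D (P ^ n) = n * D P * P ^ n`.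
theorem trinomialCoeff_adjacent (n : ℕ) (k : ℤ) :
    (n - k + 1) * (trinomialCoeff n (k - 1) : ℤ) =
      k * trinomialCoeff n k + (n + k + 1) * trinomialCoeff n (k + 1) := by
  induction n generalizing k with
  | zero =>
    simp only [trinomialCoeff]
    split_ifs <;> grind
  | succ n ih =>
    have below := ih (k - 1)
    have middle := ih k
    have above := ih (k + 1)
    simp only [trinomialCoeff, sub_add_cancel, add_sub_cancel_right] at below above ⊢
    push_cast
    linear_combination below + middle + above

theorem trinomialCoeff_neg_one (n : ℕ) : trinomialCoeff n (-1) = trinomialCoeff n 1 := by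
  have adjacent := trinomialCoeff_adjacent n 0
  simp only [sub_zero, zero_sub, zero_mul, zero_add, add_zero] at adjacent
  exact_mod_cast mul_left_cancel₀ (by positivity) adjacent

theorem trinomialCoeff_succ_zero (n : ℕ) :
    trinomialCoeff (n + 1) 0 = trinomialCoeff n 0 + 2 * trinomialCoeff n 1 := by
  simp only [trinomialCoeff, zero_sub, zero_add, trinomialCoeff_neg_one]
  ring

theorem trinomialCoeff_succ_one (n : ℕ) :
    (n + 2) * trinomialCoeff (n + 1) 1 =
      (n + 1) * (2 * trinomialCoeff n 0 + trinomialCoeff n 1) := by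
  have adjacent := trinomialCoeff_adjacent n 1
  norm_num at adjacent
  zify
  simp only [trinomialCoeff, sub_self, one_add_one_eq_two]
  push_cast
  linear_combination -adjacent

/-- The difference of the two most central trinomial coefficients: the dimension of the invariants
of `sl₂^{⊗n}`, which satisfies the Riordan recurrence. -/
def trinomialDiff (n : ℕ) : ℤ :=
  trinomialCoeff n 0 - trinomialCoeff n 1

theorem trinomialDiff_add_two (n : ℕ) :
    (n + 3) * trinomialDiff (n + 2) =
      (n + 1) * (2 * trinomialDiff (n + 1) + 3 * trinomialDiff n) := by
  have zero₁ := trinomialCoeff_succ_zero n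
  have zero₂ := trinomialCoeff_succ_zero (n + 1)
  have one₁ := trinomialCoeff_succ_one n
  have one₂ := trinomialCoeff_succ_one (n + 1)
  zify at zero₁ zero₂ one₁ one₂
  simp only [trinomialDiff]
  linear_combination (n + 3 : ℤ) * zero₂ - one₂ - 3 * (n + 1 : ℤ) * zero₁ + 3 * one₁

theorem eq_trinomialDiff_of_recurrence (R : ℕ → ℕ) (hR2 : R 2 = 1) (hR3 : R 3 = 1)
    (hRrec : ∀ n, 4 ≤ n → (n + 1) * R n = (n - 1) * (2 * R (n - 1) + 3 * R (n - 2))) (n : ℕ) :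
    (R (n + 2) : ℤ) = trinomialDiff (n + 2) := by
  induction n using Nat.twoStepInduction with
  | zero => simp [hR2, trinomialDiff, trinomialCoeff]
  | one => simp [hR3, trinomialDiff, trinomialCoeff]
  | more n ih₀ ih₁ =>
    have recR : (n + 5 : ℤ) * R (n + 4) = (n + 3) * (2 * R (n + 3) + 3 * R (n + 2)) := by
      exact_mod_cast hRrec (n + 4) (by omega)
    have recDiff := trinomialDiff_add_two (n + 2)
    push_cast at recDiff
    refine mul_left_cancel₀ (by positivity : (n + 5 : ℤ) ≠ 0) ?_
    rw [recR, ih₀, ih₁]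
    linear_combination -recDiff

end Trinomial

section Adjoint

variable {K L : Type*} [Field K] [CharZero K] [LieRing L] [LieAlgebra K L] {h e f : L}

theorem exists_basis_lie_h_eq_smul (t : IsSl2Triple h e f) (ht : t.toLieSubalgebra K = ⊤) :
    ∃ b : Basis (Fin 3) K L, ∀ i, ⁅h, b i⁆ = (2 * trinomialStep i : K) • b i := by
  have lie_h (i : Fin 3) : ⁅h, ![e, h, f] i⁆ = (2 * trinomialStep i : K) • ![e, h, f] i := by
    fin_cases i <;> simp [trinomialStep, t.lie_h_e_smul K, t.lie_lie_smul_f K]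
  have ne_zero (i : Fin 3) : ![e, h, f] i ≠ 0 := by
    fin_cases i
    exacts [t.e_ne_zero, t.h_ne_zero, t.f_ne_zero]
  have step_injective : Function.Injective trinomialStep := by decide
  have weight_injective : Function.Injective fun i ↦ (2 * trinomialStep i : K) :=
    fun i j hij ↦ step_injective (by exact_mod_cast mul_left_cancel₀ two_ne_zero hij)
  have independent : LinearIndependent K ![e, h, f] :=
    End.eigenvectors_linearIndependent' (toEnd K L L h) _ weight_injective _
      fun i ↦ ⟨End.mem_eigenspace_iff.mpr (lie_h i), ne_zero i⟩
  have spanning : ⊤ ≤ Submodule.span K (Set.range ![e, h, f]) := by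
    intro x _
    obtain ⟨a, b, c, rfl⟩ := IsSl2Triple.mem_toLieSubalgebra_iff.mp (ht ▸ LieSubalgebra.mem_top x)
    rw [t.lie_e_f]
    exact add_mem (add_mem
      (Submodule.smul_mem _ a (Submodule.subset_span ⟨0, rfl⟩))
      (Submodule.smul_mem _ b (Submodule.subset_span ⟨2, rfl⟩)))
      (Submodule.smul_mem _ c (Submodule.subset_span ⟨1, rfl⟩))
  exact ⟨.mk independent spanning, fun i ↦ by simpa using lie_h i⟩

theorem finrank_eigenspace_tensorPower (t : IsSl2Triple h e f) (ht : t.toLieSubalgebra K = ⊤)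
    (n : ℕ) (k : ℤ) :
    finrank K ((toEnd K L (⨂[K] _ : Fin n, L) h).eigenspace (2 * k : K)) =
      trinomialCoeff n k := by
  classical
  obtain ⟨b, hb⟩ := exists_basis_lie_h_eq_smul t ht
  have hbasis (s : Fin n → Fin 3) :
      toEnd K L (⨂[K] _ : Fin n, L) h (Basis.piTensorProduct (fun _ ↦ b) s) =
        (2 * (∑ i, trinomialStep (s i) : ℤ) : K) • Basis.piTensorProduct (fun _ ↦ b) s := by
    rw [Basis.piTensorProduct_apply, toEnd_apply_apply,
      lie_tprod_of_lie_eq_smul fun i ↦ hb (s i), ← Finset.mul_sum, Int.cast_sum]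
  rw [finrank_eigenspace_eq_card _ hbasis, ← card_sum_trinomialStep_eq]
  refine congrArg Finset.card (Finset.filter_congr fun s _ ↦ ?_)
  rw [mul_right_inj' two_ne_zero, Int.cast_inj]

theorem finrank_maxTrivSubmodule_tensorPower (t : IsSl2Triple h e f)
    (ht : t.toLieSubalgebra K = ⊤) (n : ℕ) :
    (finrank K (maxTrivSubmodule K L (⨂[K] _ : Fin n, L)) : ℤ) = trinomialDiff n := by
  obtain ⟨b, -⟩ := exists_basis_lie_h_eq_smul t ht
  have : FiniteDimensional K L := b.finiteDimensional_of_finite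
  have key := finrank_maxTrivSubmodule_add_finrank_eigenspace_two (M := ⨂[K] _ : Fin n, L) t ht
  have weight_zero := finrank_eigenspace_tensorPower t ht n 0
  have weight_two := finrank_eigenspace_tensorPower t ht n 1
  rw [Int.cast_zero, mul_zero] at weight_zero
  rw [Int.cast_one, mul_one] at weight_two
  rw [trinomialDiff]
  omega

theorem finrank_invariants_eq_riordan_general (t : IsSl2Triple h e f)
    (ht : t.toLieSubalgebra K = ⊤) (R : ℕ → ℕ) (hR2 : R 2 = 1) (hR3 : R 3 = 1)
    (hRrec : ∀ n, 4 ≤ n → (n + 1) * R n = (n - 1) * (2 * R (n - 1) + 3 * R (n - 2))) :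
    ∀ n, 2 ≤ n → finrank K (maxTrivSubmodule K L (⨂[K] _ : Fin n, L)) = R n := by
  intro n hn
  obtain ⟨n, rfl⟩ := Nat.exists_eq_add_of_le' hn
  have finrank_eq := (finrank_maxTrivSubmodule_tensorPower t ht (n + 2)).trans
    (eq_trinomialDiff_of_recurrence R hR2 hR3 hRrec n).symm
  exact_mod_cast finrank_eq

end Adjoint

section SpecialLinear

open LieAlgebra.SpecialLinear

variable (R : Type*) [CommRing R] [Nontrivial R]

theorem isSl2Triple_sl : IsSl2Triple (singleSubSingle (0 : Fin 2) 1 (1 : R))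
    (single 0 1 (by decide) 1) (single 1 0 (by decide) 1) where
  h_ne_zero hzero := by
    have entry := congrFun₂ (congrArg Subtype.val hzero) 0 0
    simp at entry
  lie_e_f := by
    ext i j
    rw [sl_bracket]
    fin_cases i <;> fin_cases j <;> simp
  lie_h_e_nsmul := by
    ext i j
    rw [sl_bracket]
    fin_cases i <;> fin_cases j <;> norm_num [sub_mul, mul_sub]
  lie_h_f_nsmul := by
    ext i j
    rw [sl_bracket]
    fin_cases i <;> fin_cases j <;> norm_num [sub_mul, mul_sub]

theorem toLieSubalgebra_isSl2Triple_sl_eq_top : (isSl2Triple_sl R).toLieSubalgebra R = ⊤ := by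
  refine eq_top_iff.mpr fun A _ ↦ IsSl2Triple.mem_toLieSubalgebra_iff.mpr ?_
  have trace_zero : A.1 0 0 + A.1 1 1 = 0 := by
    rw [← Matrix.trace_fin_two]
    exact A.2
  refine ⟨A.1 0 1, A.1 1 0, A.1 0 0, ?_⟩
  rw [(isSl2Triple_sl R).lie_e_f]
  ext i j
  fin_cases i <;> fin_cases j <;> simp [eq_neg_of_add_eq_zero_right trace_zero]

end SpecialLinear

theorem actOn_eq_toEnd (n : ℕ) (x : sl2) : actOn n x = toEnd ℚ sl2 (TP n) x := by
  have factor_eq (i : Fin n) :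
      (fun j ↦ if j = i then LieAlgebra.ad ℚ sl2 x else LinearMap.id) =
        Pi.mulSingle i (toEnd ℚ sl2 sl2 x) := by
    ext1 j
    exact (Pi.mulSingle_apply i _ j).symm
  change actOn n x = tensorAction ℚ (fun _ ↦ sl2) sl2 x
  simp only [actOn, tensorAction_apply, factor_eq]
  rfl

theorem invariants_eq_maxTrivSubmodule (n : ℕ) :
    Invariants n = (maxTrivSubmodule ℚ sl2 (TP n)).toSubmodule := by
  ext m
  simp [Invariants, actOn_eq_toEnd]

theorem finrank_invariants_eq_riordan
    (R : ℕ → ℕ) (hR2 : R 2 = 1) (hR3 : R 3 = 1)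
    (hRrec : ∀ n, 4 ≤ n → (n + 1) * R n = (n - 1) * (2 * R (n - 1) + 3 * R (n - 2))) :
    ∀ n, 2 ≤ n → Module.finrank ℚ (Invariants n) = R n := by
  intro n hn
  rw [invariants_eq_maxTrivSubmodule]
  exact finrank_invariants_eq_riordan_general _ (toLieSubalgebra_isSl2Triple_sl_eq_top ℚ)
    R hR2 hR3 hRrec n hn
end
end

section
/- For every n ≥ 2, the family {T_P : P a Riordan partition of {1,…,n}} is a basis of the ℚ-vector space Inv(sl₂^{⊗n}) of invariant tensors. (This is the tree basis given by values of the sl₂ weight system on Riordan trees.) -/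
/- Theorem (tree basis): for every n ≥ 2, the family {T_P}, indexed by Riordan
   partitions P of {1,…,n}, is a basis of the ℚ-vector space Inv(sl₂^{⊗n}).
   Here T_P is the tensor obtained by placing, for each block
   B = {j₁ < ⋯ < j_k} of P, the i-th factor of the κ-dual t_k of the iterated
   bracket form in position jᵢ; it is characterized (uniquely, κ being
   nondegenerate) by κ^{⊗n}(T_P, x₁⊗⋯⊗xₙ) = ∏_{B∈P} κ([[⋯[x_{j₁},x_{j₂}],⋯],x_{j_{k−1}}], x_{j_k}).
   κ and the family T are quantified via their defining properties. -/

open scoped TensorProduct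

set_option synthInstance.maxHeartbeats 1000000
set_option maxHeartbeats 1000000

noncomputable section

def H : sl2 :=
  ⟨!![1, 0; 0, -1], show _ ∈ LinearMap.ker (Matrix.traceLinearMap (Fin 2) ℚ ℚ) from
    LinearMap.mem_ker.2 (by simp [Matrix.trace_fin_two])⟩

def E : sl2 :=
  ⟨!![0, 1; 0, 0], show _ ∈ LinearMap.ker (Matrix.traceLinearMap (Fin 2) ℚ ℚ) from
    LinearMap.mem_ker.2 (by simp [Matrix.trace_fin_two])⟩

def F : sl2 :=
  ⟨!![0, 0; 1, 0], show _ ∈ LinearMap.ker (Matrix.traceLinearMap (Fin 2) ℚ ℚ) from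
    LinearMap.mem_ker.2 (by simp [Matrix.trace_fin_two])⟩

/-- Pairing of `sl₂^{⊗n}` against `x₁ ⊗ ⋯ ⊗ xₙ` via `κ^{⊗n}`. -/
def pairT (κ : sl2 →ₗ[ℚ] sl2 →ₗ[ℚ] ℚ) (n : ℕ) (x : Fin n → sl2) : TP n →ₗ[ℚ] ℚ :=
  PiTensorProduct.lift
    ((MultilinearMap.mkPiAlgebra ℚ (Fin n) ℚ).compLinearMap fun i => κ.flip (x i))

/-- Left-iterated Lie bracket of a list: `[[⋯[a₁,a₂],⋯],a_k]`. -/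
def lBrk : List sl2 → sl2
  | [] => 0
  | a :: l => l.foldl (fun y z => ⁅y, z⁆) a

/-- For a block `B = {j₁ < ⋯ < j_k}`: `κ([[⋯[x_{j₁},x_{j₂}],⋯],x_{j_{k−1}}], x_{j_k})`. -/
def blockVal (κ : sl2 →ₗ[ℚ] sl2 →ₗ[ℚ] ℚ) {n : ℕ} (x : Fin n → sl2)
    (B : Finset (Fin n)) : ℚ :=
  κ (lBrk (((B.sort (· ≤ ·)).map x).dropLast)) (((B.sort (· ≤ ·)).map x).getLastD 0)

/-- `P` is a set partition of `Fin n` all of whose blocks have ≥ 2 elements. -/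
def IsPartitionGe2 (n : ℕ) (P : Finset (Finset (Fin n))) : Prop :=
  (∀ i : Fin n, ∃! B, B ∈ P ∧ i ∈ B) ∧ (∀ B ∈ P, 2 ≤ B.card)

/-- `P` is non-crossing. -/
def IsNonCrossing (n : ℕ) (P : Finset (Finset (Fin n))) : Prop :=
  ¬ ∃ i j k l : Fin n, i < j ∧ j < k ∧ k < l ∧
      ∃ B ∈ P, ∃ C ∈ P, B ≠ C ∧ i ∈ B ∧ k ∈ B ∧ j ∈ C ∧ l ∈ C

def IsRiordanPartition (n : ℕ) (P : Finset (Finset (Fin n))) : Prop :=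
  IsPartitionGe2 n P ∧ IsNonCrossing n P

/-!
Pair tensors with words in the weight basis `E, H, F`. Reading a word as a lattice path with steps
`+1, 0, -1`, a highest weight multilinear form is determined by its values on the words whose path
is a Riordan path: evaluate the first slot, and at height `0` use that a vector of weight zero
killed by `E` is also killed by `F`. Writing `e`, `h`, `f` at the least, middle and greatest
elements of the blocks turns a Riordan partition into such a word, and the partition is recovered
from the levels of the path. An iterated bracket of basis vectors vanishes unless its weight is at
most that of `E`, so `T_P` pairs to zero with every word whose path is not below the path of `P`,
while its value on the word of `P` itself is a product of numbers `κ((-2)ᵐ E, F)`. The `T_P` are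
therefore triangular with respect to functionals that separate invariants.
-/

/-! ### Triangular families -/

theorem linearIndependent_of_triangular {R M ι α : Type*} [CommRing R] [IsDomain R]
    [AddCommGroup M] [Module R M] [PartialOrder α] {T : ι → M} {ℓ : ι → Module.Dual R M}
    {r : ι → α} (hr : Function.Injective r) (hdiag : ∀ i, ℓ i (T i) ≠ 0)
    (htri : ∀ i j, ℓ i (T j) ≠ 0 → r i ≤ r j) : LinearIndependent R T := by
  rw [linearIndependent_iff]
  intro c hc
  by_contra hne
  obtain ⟨i, hi, hmax⟩ := c.support.exists_maximalFor r (Finsupp.support_nonempty_iff.mpr hne)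
  have hoff : ∀ j ∈ c.support, j ≠ i → c j • ℓ i (T j) = 0 := fun j hj hji ↦ by
    by_contra hnz
    have hle : r i ≤ r j := htri i j (right_ne_zero_of_smul hnz)
    exact hji (hr (le_antisymm (hmax hj hle) hle))
  have hval : ℓ i (Finsupp.linearCombination R T c) = c i • ℓ i (T i) := by
    rw [Finsupp.linearCombination_apply, Finsupp.sum, map_sum]
    simp only [map_smul]
    exact Finset.sum_eq_single_of_mem i hi hoff
  rw [hc, map_zero, eq_comm, smul_eq_zero] at hval
  exact hval.elim (Finsupp.mem_support_iff.mp hi) (hdiag i)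

theorem span_range_eq_of_linearIndependent {K M ι : Type*} [Field K] [AddCommGroup M] [Module K M]
    [Finite ι] {W : Submodule K M} {T : ι → M} {ℓ : ι → Module.Dual K M}
    (hT : LinearIndependent K T) (hmem : ∀ i, T i ∈ W)
    (hℓ : ∀ w ∈ W, (∀ i, ℓ i w = 0) → w = 0) : Submodule.span K (Set.range T) = W := by
  have := Fintype.ofFinite ι
  let Φ : W →ₗ[K] ι → K := LinearMap.pi ℓ ∘ₗ W.subtype
  have hΦ : Function.Injective Φ := (injective_iff_map_eq_zero Φ).mpr fun w hw ↦
    Subtype.ext (hℓ w w.2 (congrFun hw))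
  have : FiniteDimensional K W := FiniteDimensional.of_injective Φ hΦ
  refine Submodule.eq_of_le_of_finrank_le (Submodule.span_le.mpr (Set.range_subset_iff.mpr hmem)) ?_
  calc Module.finrank K W ≤ Module.finrank K (ι → K) := LinearMap.finrank_le_finrank_of_injective hΦ
    _ = Fintype.card ι := Module.finrank_fintype_fun_eq_card K
    _ = Module.finrank K (Submodule.span K (Set.range T)) := (finrank_span_eq_card hT).symm

/-! ### Lie actions on multilinear forms -/

section Lie

variable {R L V : Type*} [CommRing R] [LieRing L] [LieAlgebra R L] [AddCommGroup V] [Module R V]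
  [LieRingModule L V] [LieModule R L V]

variable (R) in
theorem lie_f_eq_zero_of_lie_e_of_lie_h [IsDomain R] [CharZero R] [IsNoetherian R V]
    [Module.IsTorsionFree R V] {h e f : L} (t : IsSl2Triple h e f) {m : V}
    (he : ⁅e, m⁆ = 0) (hh : ⁅h, m⁆ = 0) : ⁅f, m⁆ = 0 := by
  rcases eq_or_ne m 0 with rfl | hm
  · exact lie_zero f
  · have hprim : IsSl2Triple.HasPrimitiveVectorWith t m (0 : R) :=
      ⟨hm, by rw [hh, zero_smul], he⟩
    simpa using hprim.pow_toEnd_f_eq_zero_of_eq_nat (n := 0) Nat.cast_zero.symm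

/-- The contragredient action of `y` on `n`-linear forms, `-∑ᵢ G(…, ⁅y, xᵢ⁆, …)`. -/
def formAction (n : ℕ) (y : L) : Module.End R (MultilinearMap R (fun _ : Fin n ↦ V) R) :=
  -∑ i : Fin n, MultilinearMap.compLinearMapₗ fun j ↦
    if j = i then LieModule.toEnd R L V y else LinearMap.id

theorem formAction_apply {n : ℕ} (y : L) (G : MultilinearMap R (fun _ : Fin n ↦ V) R)
    (x : Fin n → V) : formAction n y G x = -∑ i, G (Function.update x i ⁅y, x i⁆) := by
  have hslot (i : Fin n) : (fun j ↦ (if j = i then LieModule.toEnd R L V y else LinearMap.id) (x j))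
      = Function.update x i ⁅y, x i⁆ := by
    ext j
    rcases eq_or_ne j i with rfl | hji
    · simp
    · simp [hji]
  simp [formAction, LinearMap.sum_apply, hslot]

theorem curryLeft_formAction {n : ℕ} (y : L) (G : MultilinearMap R (fun _ : Fin (n + 1) ↦ V) R)
    (a : V) :
    (formAction (n + 1) y G).curryLeft a = formAction n y (G.curryLeft a) - G.curryLeft ⁅y, a⁆ := by
  ext x
  simp only [MultilinearMap.curryLeft_apply, formAction_apply, sub_apply,
    Fin.sum_univ_succ, Fin.update_cons_zero, ← Fin.cons_update, Fin.cons_zero, Fin.cons_succ]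
  ring

theorem formAction_formAction {n : ℕ} (y z : L) (G : MultilinearMap R (fun _ : Fin n ↦ V) R) :
    formAction n y (formAction n z G) =
      formAction n ⁅y, z⁆ G + formAction n z (formAction n y G) := by
  induction n with
  | zero => simp [formAction]
  | succ n ih =>
    apply (multilinearCurryLeftEquiv R (fun _ : Fin (n + 1) ↦ V) R).injective
    ext1 a
    simp only [multilinearCurryLeftEquiv_apply, curryLeft_formAction, map_sub, ih (G.curryLeft a),
      map_add, LinearMap.add_apply, lie_lie]
    abel

instance formLieRingModule (n : ℕ) :
    LieRingModule L (MultilinearMap R (fun _ : Fin n ↦ V) R) where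
  bracket y G := formAction n y G
  add_lie y z G := by
    ext x
    simp only [formAction_apply, add_lie, MultilinearMap.map_update_add, Finset.sum_add_distrib,
      neg_add, add_apply]
  lie_add y := map_add (formAction n y)
  leibniz_lie := formAction_formAction

instance formLieModule (n : ℕ) : LieModule R L (MultilinearMap R (fun _ : Fin n ↦ V) R) where
  smul_lie c y G := by
    ext x
    change formAction n (c • y) G x = c • formAction n y G x
    simp only [formAction_apply, smul_lie, MultilinearMap.map_update_smul, ← Finset.smul_sum,
      smul_neg]
  lie_smul c y := map_smul (formAction n y) c

theorem lie_form_apply {n : ℕ} (y : L) (G : MultilinearMap R (fun _ : Fin n ↦ V) R)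
    (x : Fin n → V) : ⁅y, G⁆ x = -∑ i, G (Function.update x i ⁅y, x i⁆) :=
  formAction_apply y G x

theorem curryLeft_lie {n : ℕ} (y : L) (G : MultilinearMap R (fun _ : Fin (n + 1) ↦ V) R) (a : V) :
    ⁅y, G⁆.curryLeft a = ⁅y, G.curryLeft a⁆ - G.curryLeft ⁅y, a⁆ :=
  curryLeft_formAction y G a

theorem lie_curryLeft_of_lie_eq_zero {n : ℕ} {y : L}
    {G : MultilinearMap R (fun _ : Fin (n + 1) ↦ V) R} (hG : ⁅y, G⁆ = 0) (a : V) :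
    ⁅y, G.curryLeft a⁆ = G.curryLeft ⁅y, a⁆ := by
  have hcurry := curryLeft_lie y G a
  rw [hG] at hcurry
  exact sub_eq_zero.mp hcurry.symm

end Lie

/-! ### The Lie algebra `sl₂` -/

theorem isSl2Triple_H_E_F : IsSl2Triple H E F where
  h_ne_zero h := by simpa [H] using congrArg (fun x : sl2 ↦ x.1 0 0) h
  lie_e_f := Subtype.ext (by simp [H, E, F, LieSubalgebra.coe_bracket, Ring.lie_def])
  lie_h_e_nsmul := Subtype.ext (by
    ext i j
    fin_cases i <;> fin_cases j <;>
      norm_num [H, E, LieSubalgebra.coe_bracket, Ring.lie_def])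
  lie_h_f_nsmul := Subtype.ext (by
    ext i j
    fin_cases i <;> fin_cases j <;>
      norm_num [H, F, LieSubalgebra.coe_bracket, Ring.lie_def])

theorem lie_H_E : ⁅H, E⁆ = (2 : ℚ) • E := by
  rw [isSl2Triple_H_E_F.lie_h_e_nsmul]; module

theorem lie_H_F : ⁅H, F⁆ = -(2 : ℚ) • F := by
  rw [isSl2Triple_H_E_F.lie_h_f_nsmul]; module

theorem lie_F_H : ⁅F, H⁆ = (2 : ℚ) • F := by
  rw [← lie_skew, lie_H_F]; module

theorem lie_F_E : ⁅F, E⁆ = -H := by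
  rw [← lie_skew, isSl2Triple_H_E_F.lie_e_f]

theorem lie_E_H : ⁅E, H⁆ = -(2 : ℚ) • E := by
  rw [← lie_skew, lie_H_E]; module

theorem sl2_apply_one_one (x : sl2) : x.1 1 1 = -x.1 0 0 := by
  have hx : Matrix.trace x.1 = 0 := x.2
  rw [Matrix.trace_fin_two] at hx
  linarith

theorem sl2_eq_add (x : sl2) : x = x.1 0 1 • E + x.1 0 0 • H + x.1 1 0 • F := by
  ext i j
  fin_cases i <;> fin_cases j <;> simp [H, E, F, sl2_apply_one_one]

/-- The letters indexing the weight basis `E, H, F` of `sl₂`. -/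
inductive Letter where
  | e
  | h
  | f

namespace Letter

/-- Half the `ad H`-eigenvalue of the basis vector, so that a step of a lattice path is a unit. -/
def wt : Letter → ℤ
  | e => 1
  | h => 0
  | f => -1

/-- The basis vector of `sl₂` named by a letter. -/
def vec : Letter → sl2
  | e => E
  | h => H
  | f => F

theorem lie_H_vec (l : Letter) : ⁅H, l.vec⁆ = (2 * (l.wt : ℚ)) • l.vec := by
  cases l <;> simp [vec, wt, lie_H_E, lie_H_F]

theorem wt_injective : Function.Injective wt := by
  rintro (_ | _ | _) (_ | _ | _) <;> simp [wt]

theorem linearMap_ext {M : Type*} [AddCommGroup M] [Module ℚ M] {φ ψ : sl2 →ₗ[ℚ] M}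
    (hφψ : ∀ l : Letter, φ l.vec = ψ l.vec) : φ = ψ := by
  ext x
  have hE : φ E = ψ E := hφψ e
  have hH : φ H = ψ H := hφψ h
  have hF : φ F = ψ F := hφψ f
  rw [sl2_eq_add x]
  simp only [map_add, map_smul, hE, hH, hF]

end Letter

theorem lie_H_lie_H_lie_H (x : sl2) : ⁅H, ⁅H, ⁅H, x⁆⁆⁆ = (4 : ℚ) • ⁅H, x⁆ := by
  rw [sl2_eq_add x]
  simp only [lie_add, lie_smul, lie_self, lie_zero, lie_H_E, lie_H_F]
  module

theorem weight_le_one_of_lie_H_eq {x : sl2} {k : ℤ} (hx : x ≠ 0)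
    (hk : ⁅H, x⁆ = (2 * (k : ℚ)) • x) : k ≤ 1 := by
  have hcube : ((2 * (k : ℚ)) ^ 3) • x = (4 * (2 * (k : ℚ))) • x := by
    have := lie_H_lie_H_lie_H x
    simp only [hk, lie_smul, smul_smul] at this
    rw [← this]
    module
  have hkk : k ^ 3 = k := by
    have := smul_left_injective ℚ hx hcube
    have hq : (k : ℚ) ^ 3 = k := by linear_combination this / 8
    exact_mod_cast hq
  by_contra! hlt
  nlinarith [mul_pos (by linarith : 0 < k) (by linarith : 0 < k - 1)]

/-- The trace form `tr (x y)` of the standard representation; it is the `κ` of the theorem. -/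
def sl2TraceForm : LinearMap.BilinForm ℚ sl2 :=
  LinearMap.mk₂ ℚ (fun x y ↦ Matrix.trace (x.1 * y.1))
    (fun _ _ _ ↦ by simp [add_mul]) (fun _ _ _ ↦ by simp)
    (fun _ _ _ ↦ by simp [mul_add]) (fun _ _ _ ↦ by simp)

theorem sl2TraceForm_apply (x y : sl2) : sl2TraceForm x y = Matrix.trace (x.1 * y.1) := rfl

theorem sl2TraceForm_lieInvariant : sl2TraceForm.lieInvariant sl2 := fun x y z ↦ by
  simp only [sl2TraceForm_apply, LieSubalgebra.coe_bracket, Ring.lie_def, sub_mul, mul_sub,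
    Matrix.trace_sub, mul_assoc]
  rw [Matrix.trace_mul_comm x.1 (y.1 * z.1), mul_assoc]
  ring

theorem sl2TraceForm_isSymm : sl2TraceForm.IsSymm :=
  ⟨fun x y ↦ Matrix.trace_mul_comm x.1 y.1⟩

theorem sl2TraceForm_nondegenerate : sl2TraceForm.Nondegenerate := by
  refine (LinearMap.IsRefl.nondegenerate_iff_separatingLeft sl2TraceForm_isSymm.isRefl).mpr
    fun x hx ↦ ?_
  have hF : x.1 1 0 = 0 := by
    simpa [sl2TraceForm_apply, Matrix.trace_fin_two, Matrix.mul_apply, E] using hx E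
  have hH : x.1 0 0 = 0 := by
    simpa [sl2TraceForm_apply, Matrix.trace_fin_two, Matrix.mul_apply, H, sl2_apply_one_one]
      using hx H
  have hE : x.1 0 1 = 0 := by
    simpa [sl2TraceForm_apply, Matrix.trace_fin_two, Matrix.mul_apply, F] using hx F
  rw [sl2_eq_add x, hE, hH, hF]
  module

theorem eq_sl2TraceForm {κ : LinearMap.BilinForm ℚ sl2}
    (hκ : ∀ a b : Letter, κ a.vec b.vec = sl2TraceForm a.vec b.vec) : κ = sl2TraceForm :=
  Letter.linearMap_ext fun a ↦ Letter.linearMap_ext (hκ a)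

/-! ### Riordan words -/

section Height

variable {n : ℕ}

/-- The height, after `k` steps, of the lattice path whose `j`-th step is the weight of the letter
`w j`. -/
def height (w : Fin n → Letter) (k : ℕ) : ℤ := ∑ j : Fin n with j.val < k, (w j).wt

theorem height_zero (w : Fin n → Letter) : height w 0 = 0 := by simp [height]

theorem height_succ (w : Fin n → Letter) (i : Fin n) :
    height w (i + 1) = height w i + (w i).wt := by
  have hins : Finset.univ.filter (fun j : Fin n ↦ j.val < i + 1) =
      insert i (Finset.univ.filter fun j : Fin n ↦ j.val < i) := by
    ext j
    simp [le_iff_eq_or_lt, Fin.ext_iff]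
  rw [height, hins, Finset.sum_insert (by simp), height, add_comm]

theorem height_cons_succ (l : Letter) (w : Fin n → Letter) (k : ℕ) :
    height (Fin.cons l w : Fin (n + 1) → Letter) (k + 1) = l.wt + height w k := by
  simp [height, Finset.sum_filter, Fin.sum_univ_succ]

theorem height_injective : Function.Injective (height : (Fin n → Letter) → ℕ → ℤ) := by
  intro v w hvw
  ext1 i
  have hi := height_succ v i
  rw [hvw, height_succ w i] at hi
  exact Letter.wt_injective (add_left_cancel hi).symm

/-- Words whose lattice path, started at height `k`, ends at height `0`, never goes below `0`, and
has no horizontal step at height `0`. For `k = 0` these are the Riordan paths. -/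
structure IsRiordanFrom (k : ℤ) (w : Fin n → Letter) : Prop where
  nonneg : ∀ m, 0 ≤ k + height w m
  add_height_eq_zero : k + height w n = 0
  pos_of_eq_h : ∀ i, w i = .h → 1 ≤ k + height w i

theorem IsRiordanFrom.cons {k : ℤ} {l : Letter} {w : Fin n → Letter} (hk : 0 ≤ k)
    (hl : l = .h → 1 ≤ k) (hw : IsRiordanFrom (k + l.wt) w) :
    IsRiordanFrom k (Fin.cons l w : Fin (n + 1) → Letter) where
  nonneg m := by
    cases m with
    | zero => simpa [height_zero] using hk
    | succ m => simpa [height_cons_succ, add_assoc] using hw.nonneg m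
  add_height_eq_zero := by simpa [height_cons_succ, add_assoc] using hw.add_height_eq_zero
  pos_of_eq_h i := by
    refine Fin.cases ?_ (fun j ↦ ?_) i
    · simpa [height_zero] using hl
    · simpa [height_cons_succ, add_assoc] using hw.pos_of_eq_h j

end Height

/-! ### Highest weight forms -/

section HighestWeight

variable {n : ℕ} {G : MultilinearMap ℚ (fun _ : Fin (n + 1) ↦ sl2) ℚ}

theorem lie_H_curryLeft_vec {k : ℤ} (hG : ⁅H, G⁆ = (2 * (k : ℚ)) • G) (l : Letter) :
    ⁅H, G.curryLeft l.vec⁆ = (2 * ((k + l.wt : ℤ) : ℚ)) • G.curryLeft l.vec := by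
  have hcurry : (2 * (k : ℚ)) • G.curryLeft l.vec =
      ⁅H, G.curryLeft l.vec⁆ - (2 * (l.wt : ℚ)) • G.curryLeft l.vec := by
    have hcurry := curryLeft_lie H G l.vec
    rwa [hG, l.lie_H_vec, map_smul] at hcurry
  rw [sub_eq_iff_eq_add.mp hcurry.symm]
  push_cast
  module

theorem curryLeft_eq_zero_of_invariant (hE : ⁅E, G⁆ = 0) (hH : ⁅H, G⁆ = 0)
    (hcE : G.curryLeft E = 0) : G.curryLeft H = 0 ∧ G.curryLeft F = 0 := by
  have hF : ⁅F, G⁆ = 0 := lie_f_eq_zero_of_lie_e_of_lie_h ℚ isSl2Triple_H_E_F hE hH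
  have hcH : G.curryLeft H = 0 := by
    simpa [hcE, lie_F_E] using lie_curryLeft_of_lie_eq_zero hF E
  have hcF : G.curryLeft F = 0 := by
    have htwo : (2 : ℚ) • G.curryLeft F = 0 := by
      rw [← map_smul, ← lie_F_H, ← lie_curryLeft_of_lie_eq_zero hF, hcH, lie_zero]
    exact (smul_eq_zero.mp htwo).resolve_left two_ne_zero
  exact ⟨hcH, hcF⟩

theorem form_eq_zero_of_curryLeft_vec (hG : ∀ l : Letter, G.curryLeft l.vec = 0) : G = 0 :=
  (multilinearCurryLeftEquiv ℚ (fun _ : Fin (n + 1) ↦ sl2) ℚ).map_eq_zero_iff.mp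
    (Letter.linearMap_ext hG)

end HighestWeight

-- At positive height all three first letters are allowed. At height zero only `E` is, and then
-- `G` is killed by `E` and `H`, hence by `F`, which recovers the values at `H` and `F`.
theorem form_eq_zero_of_isRiordanFrom {n : ℕ} {k : ℤ} (hk : 0 ≤ k)
    {G : MultilinearMap ℚ (fun _ : Fin n ↦ sl2) ℚ} (hE : ⁅E, G⁆ = 0)
    (hH : ⁅H, G⁆ = (2 * (k : ℚ)) • G)
    (hG : ∀ w : Fin n → Letter, IsRiordanFrom k w → G (fun i ↦ (w i).vec) = 0) : G = 0 := by
  induction n generalizing k with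
  | zero =>
    ext x
    rcases hk.eq_or_lt with rfl | hpos
    · rw [Subsingleton.elim x fun i ↦ ((Fin.elim0 i : Letter)).vec]
      exact hG _ ⟨by simp [height], by simp [height], fun i ↦ i.elim0⟩
    · have hx := congrArg (fun G' ↦ G' x) hH
      simpa [lie_form_apply, hpos.ne'] using hx
  | succ n ih =>
    have hstep (l : Letter) (hkl : 0 ≤ k + l.wt) (hl : l = .h → 1 ≤ k)
        (hEl : ⁅E, G.curryLeft l.vec⁆ = 0) : G.curryLeft l.vec = 0 :=
      ih hkl hEl (lie_H_curryLeft_vec hH l) fun w hw ↦ by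
        rw [← hG _ (hw.cons hk hl), MultilinearMap.curryLeft_apply]
        congr 1
        ext1 i
        refine Fin.cases ?_ (fun j ↦ ?_) i <;> rfl
    have hcE : G.curryLeft E = 0 := hstep .e (by simp only [Letter.wt]; lia) (by simp)
      (by rw [lie_curryLeft_of_lie_eq_zero hE, Letter.vec, lie_self, map_zero])
    have hcHF : G.curryLeft H = 0 ∧ G.curryLeft F = 0 := by
      rcases hk.eq_or_lt with rfl | hpos
      · exact curryLeft_eq_zero_of_invariant hE (by simpa using hH) hcE
      · have hcH : G.curryLeft H = 0 := hstep .h (by simp only [Letter.wt]; lia) (fun _ ↦ hpos)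
          (by rw [lie_curryLeft_of_lie_eq_zero hE, Letter.vec, lie_E_H, map_smul, hcE, smul_zero])
        exact ⟨hcH, hstep .f (by simp only [Letter.wt]; lia) (by simp) (by
          rw [lie_curryLeft_of_lie_eq_zero hE, Letter.vec, isSl2Triple_H_E_F.lie_e_f, hcH])⟩
    exact form_eq_zero_of_curryLeft_vec fun l ↦ by
      cases l
      exacts [hcE, hcHF.1, hcHF.2]

/-! ### Tensors as multilinear forms -/

section PairForm

variable {κ : LinearMap.BilinForm ℚ sl2} {n : ℕ}

variable (κ n) in
/-- The multilinear form `x ↦ κ^{⊗n}(T, x₁ ⊗ ⋯ ⊗ xₙ)` attached to a tensor `T`. -/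
def pairForm : TP n →ₗ[ℚ] MultilinearMap ℚ (fun _ : Fin n ↦ sl2) ℚ :=
  PiTensorProduct.lift.symm.toLinearMap ∘ₗ PiTensorProduct.dualDistrib ∘ₗ
    PiTensorProduct.map fun _ ↦ κ

theorem pairForm_tprod (t x : Fin n → sl2) :
    pairForm κ n (⨂ₜ[ℚ] i, t i) x = ∏ i, κ (t i) (x i) := by
  simp [pairForm, PiTensorProduct.lift_symm]

theorem pairT_eq_pairForm (x : Fin n → sl2) (T : TP n) : pairT κ n x T = pairForm κ n T x := by
  induction T using PiTensorProduct.induction_on with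
  | smul_tprod c t => simp [pairForm_tprod, pairT]
  | add T U hT hU => simp only [map_add, add_apply, hT, hU]

theorem pairForm_injective (hκ : κ.Nondegenerate) : Function.Injective (pairForm κ n) :=
  ((PiTensorProduct.congr fun _ ↦ κ.toDual hκ) ≪≫ₗ PiTensorProduct.dualDistribEquiv ≪≫ₗ
    PiTensorProduct.lift.symm).injective

theorem actOn_tprod (y : sl2) (t : Fin n → sl2) :
    actOn n y (⨂ₜ[ℚ] i, t i) = ∑ i, ⨂ₜ[ℚ] j, Function.update t i ⁅y, t i⁆ j := by
  have hslot (i j : Fin n) : (if j = i then LieAlgebra.ad ℚ sl2 y else LinearMap.id) (t j) =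
      Function.update t i ⁅y, t i⁆ j := by
    rcases eq_or_ne j i with rfl | hji
    · simp
    · simp [hji]
  simp [actOn, LinearMap.sum_apply, PiTensorProduct.map_tprod, hslot]

theorem prod_apply_update_lie (hκ : κ.lieInvariant sl2) (y : sl2) (t x : Fin n → sl2) (i : Fin n) :
    ∏ j, κ (Function.update t i ⁅y, t i⁆ j) (x j) =
      -∏ j, κ (t j) (Function.update x i ⁅y, x i⁆ j) := by
  rw [← Finset.mul_prod_erase _ _ (Finset.mem_univ i), ← Finset.mul_prod_erase _ _
    (Finset.mem_univ i), Function.update_self, Function.update_self, hκ, neg_mul]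
  congr 2
  refine Finset.prod_congr rfl fun j hj ↦ ?_
  rw [Function.update_of_ne (Finset.ne_of_mem_erase hj),
    Function.update_of_ne (Finset.ne_of_mem_erase hj)]

theorem pairForm_actOn (hκ : κ.lieInvariant sl2) (y : sl2) (T : TP n) :
    pairForm κ n (actOn n y T) = ⁅y, pairForm κ n T⁆ := by
  induction T using PiTensorProduct.induction_on with
  | smul_tprod c t =>
    rw [map_smul, map_smul, map_smul, lie_smul]
    congr 1
    ext x
    simp only [actOn_tprod, map_sum, sum_apply, pairForm_tprod, lie_form_apply,
      prod_apply_update_lie hκ, Finset.sum_neg_distrib]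
  | add T U hT hU => simp only [map_add, lie_add, hT, hU]

theorem mem_invariants_iff (hκ : κ.lieInvariant sl2) (hnd : κ.Nondegenerate) {T : TP n} :
    T ∈ Invariants n ↔ ∀ y : sl2, ⁅y, pairForm κ n T⁆ = 0 := by
  simp only [Invariants, Submodule.mem_iInf, LinearMap.mem_ker, ← pairForm_actOn hκ,
    map_eq_zero_iff _ (pairForm_injective hnd)]

theorem eq_zero_of_mem_invariants (hκ : κ.lieInvariant sl2) (hnd : κ.Nondegenerate) {T : TP n}
    (hT : T ∈ Invariants n)
    (hval : ∀ w : Fin n → Letter, IsRiordanFrom 0 w → pairT κ n (fun i ↦ (w i).vec) T = 0) :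
    T = 0 := by
  rw [mem_invariants_iff hκ hnd] at hT
  refine (map_eq_zero_iff _ (pairForm_injective hnd)).mp
    (form_eq_zero_of_isRiordanFrom le_rfl (hT E) (by simp [hT H]) fun w hw ↦ ?_)
  rw [← pairT_eq_pairForm, hval w hw]

end PairForm

/-! ### Iterated brackets -/

theorem lBrk_append_singleton {l : List sl2} (hl : l ≠ []) (a : sl2) :
    lBrk (l ++ [a]) = ⁅lBrk l, a⁆ := by
  obtain ⟨b, l, rfl⟩ := List.exists_cons_of_ne_nil hl
  simp [lBrk, List.foldl_append]

theorem lBrk_ne_zero_of_isPrefix {l l' : List sl2} (hpre : l <+: l') (hl : l ≠ [])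
    (hne : lBrk l' ≠ 0) : lBrk l ≠ 0 := by
  obtain ⟨s, rfl⟩ := hpre
  induction s using List.reverseRecOn with
  | nil => simpa using hne
  | append_singleton s a ih =>
    refine ih fun hzero ↦ hne ?_
    rw [← List.append_assoc, lBrk_append_singleton (by simp [hl]), hzero, zero_lie]

theorem lie_H_lBrk_vec (l : List Letter) :
    ⁅H, lBrk (l.map Letter.vec)⁆ =
      (2 * ((l.map Letter.wt).sum : ℚ)) • lBrk (l.map Letter.vec) := by
  induction l using List.reverseRecOn with
  | nil => simp [lBrk]
  | append_singleton l a ih =>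
    rcases eq_or_ne l [] with rfl | hl
    · simpa [lBrk] using a.lie_H_vec
    · simp only [List.map_append, List.map_cons, List.map_nil, List.sum_append, List.sum_singleton]
      rw [lBrk_append_singleton (by simpa using hl), leibniz_lie, ih, a.lie_H_vec, smul_lie,
        lie_smul]
      push_cast
      module

theorem sum_wt_le_one_of_lBrk_ne_zero {l : List Letter} (hne : lBrk (l.map Letter.vec) ≠ 0) :
    (l.map Letter.wt).sum ≤ 1 :=
  weight_le_one_of_lie_H_eq hne (lie_H_lBrk_vec l)

theorem sum_toFinset_append_singleton {ι M : Type*} [DecidableEq ι] [AddCommMonoid M] {l : List ι}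
    {a : ι} (ha : a ∉ l) (g : ι → M) :
    ∑ i ∈ (l ++ [a]).toFinset, g i = ∑ i ∈ l.toFinset, g i + g a := by
  have hins : (l ++ [a]).toFinset = insert a l.toFinset := by
    ext
    simp
  rw [hins, Finset.sum_insert (by simpa using ha), add_comm]

theorem sum_lBrk_map_update {ι : Type*} [DecidableEq ι] (y : sl2) (x : ι → sl2) {l : List ι}
    (hl : l.Nodup) :
    ∑ i ∈ l.toFinset, lBrk (l.map (Function.update x i ⁅y, x i⁆)) = ⁅y, lBrk (l.map x)⁆ := by
  induction l using List.reverseRecOn with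
  | nil => simp [lBrk]
  | append_singleton l a ih =>
    rcases eq_or_ne l [] with rfl | hne
    · simp [lBrk]
    obtain ⟨hl', ha⟩ : l.Nodup ∧ a ∉ l := by simpa [List.nodup_append, imp_not_comm] using hl
    have happend (z : ι → sl2) : lBrk ((l ++ [a]).map z) = ⁅lBrk (l.map z), z a⁆ := by
      rw [List.map_append, List.map_singleton, lBrk_append_singleton (by simpa using hne)]
    have hinit : ∀ i ∈ l.toFinset, lBrk ((l ++ [a]).map (Function.update x i ⁅y, x i⁆)) =
        ⁅lBrk (l.map (Function.update x i ⁅y, x i⁆)), x a⁆ := fun i hi ↦ by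
      rw [happend, Function.update_of_ne (ne_of_mem_of_not_mem (List.mem_toFinset.mp hi) ha).symm]
    have hlast : lBrk ((l ++ [a]).map (Function.update x a ⁅y, x a⁆)) =
        ⁅lBrk (l.map x), ⁅y, x a⁆⁆ := by
      rw [happend, Function.update_self, hl'.map_update, if_neg ha]
    rw [sum_toFinset_append_singleton ha, Finset.sum_congr rfl hinit, ← sum_lie,
      ih hl', hlast, happend, leibniz_lie y]

/-- The value `κ([[⋯[a₁,a₂],⋯],a_{k-1}], a_k)`;
`blockVal` evaluates it on the vectors of a block. -/
def listVal (κ : LinearMap.BilinForm ℚ sl2) (l : List sl2) : ℚ :=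
  κ (lBrk l.dropLast) (l.getLastD 0)

section ListVal

variable {κ : LinearMap.BilinForm ℚ sl2}

theorem listVal_append_singleton (l : List sl2) (a : sl2) :
    listVal κ (l ++ [a]) = κ (lBrk l) a := by
  simp [listVal]

theorem sum_listVal_map_update {ι : Type*} [DecidableEq ι] (hκ : κ.lieInvariant sl2) (y : sl2)
    (x : ι → sl2) {l : List ι} (hl : l.Nodup) :
    ∑ i ∈ l.toFinset, listVal κ (l.map (Function.update x i ⁅y, x i⁆)) = 0 := by
  rcases List.eq_nil_or_concat' l with rfl | ⟨l, a, rfl⟩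
  · simp
  obtain ⟨hl', ha⟩ : l.Nodup ∧ a ∉ l := by simpa [List.nodup_append, imp_not_comm] using hl
  have happend (z : ι → sl2) : listVal κ ((l ++ [a]).map z) = κ (lBrk (l.map z)) (z a) := by
    rw [List.map_append, List.map_singleton, listVal_append_singleton]
  have hinit : ∀ i ∈ l.toFinset, listVal κ ((l ++ [a]).map (Function.update x i ⁅y, x i⁆)) =
      κ (lBrk (l.map (Function.update x i ⁅y, x i⁆))) (x a) := fun i hi ↦ by
    rw [happend, Function.update_of_ne (ne_of_mem_of_not_mem (List.mem_toFinset.mp hi) ha).symm]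
  have hlast : listVal κ ((l ++ [a]).map (Function.update x a ⁅y, x a⁆)) =
      κ (lBrk (l.map x)) ⁅y, x a⁆ := by
    rw [happend, Function.update_self, hl'.map_update, if_neg ha]
  rw [sum_toFinset_append_singleton ha, Finset.sum_congr rfl hinit, ← LinearMap.sum_apply,
    ← map_sum, sum_lBrk_map_update y x hl', hκ, hlast, neg_add_cancel]

theorem weight_add_weight_eq_zero (hκ : κ.lieInvariant sl2) {a b : sl2} {k m : ℤ}
    (ha : ⁅H, a⁆ = (2 * (k : ℚ)) • a) (hb : ⁅H, b⁆ = (2 * (m : ℚ)) • b) (hab : κ a b ≠ 0) :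
    k + m = 0 := by
  have hinv := hκ H a b
  rw [ha, hb, map_smul, map_smul, LinearMap.smul_apply, smul_eq_mul, smul_eq_mul] at hinv
  have hsum : ((k : ℚ) + m) * κ a b = 0 := by linarith
  exact_mod_cast (mul_eq_zero.mp hsum).resolve_right hab

theorem sum_wt_eq_zero_of_listVal_ne_zero (hκ : κ.lieInvariant sl2) {l : List Letter}
    (hl : listVal κ (l.map Letter.vec) ≠ 0) : (l.map Letter.wt).sum = 0 := by
  rcases List.eq_nil_or_concat' l with rfl | ⟨l, a, rfl⟩
  · simp
  rw [List.map_append, List.map_singleton, listVal_append_singleton] at hl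
  simpa using weight_add_weight_eq_zero hκ (lie_H_lBrk_vec l) a.lie_H_vec hl

theorem sum_wt_prefix_le_one (hκ : κ.lieInvariant sl2) {l l' : List Letter} (hpre : l' <+: l)
    (hl : listVal κ (l.map Letter.vec) ≠ 0) : (l'.map Letter.wt).sum ≤ 1 := by
  rcases eq_or_ne l' [] with rfl | hne
  · simp
  rcases List.eq_nil_or_concat' l with rfl | ⟨l, a, rfl⟩
  · exact absurd (List.prefix_nil.mp hpre) hne
  rcases List.prefix_concat_iff.mp hpre with rfl | hpre'
  · exact (sum_wt_eq_zero_of_listVal_ne_zero hκ hl).trans_le zero_le_one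
  rw [List.map_append, List.map_singleton, listVal_append_singleton] at hl
  have hbrk : lBrk (l.map Letter.vec) ≠ 0 := fun hzero ↦ hl (by rw [hzero, map_zero]; rfl)
  exact sum_wt_le_one_of_lBrk_ne_zero
    (lBrk_ne_zero_of_isPrefix (hpre'.map _) (by simpa using hne) hbrk)

theorem lBrk_E_cons_replicate_H (m : ℕ) :
    lBrk (E :: List.replicate m H) = (-2 : ℚ) ^ m • E := by
  induction m with
  | zero => simp [lBrk]
  | succ m ih =>
    rw [List.replicate_succ', ← List.cons_append, lBrk_append_singleton (List.cons_ne_nil _ _), ih,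
      smul_lie, lie_E_H, smul_smul, pow_succ]

theorem listVal_E_H_F_ne_zero (hEF : κ E F ≠ 0) (m : ℕ) :
    listVal κ (E :: List.replicate m H ++ [F]) ≠ 0 := by
  rw [listVal_append_singleton, lBrk_E_cons_replicate_H, map_smul, LinearMap.smul_apply]
  exact smul_ne_zero (by simp) hEF

end ListVal

/-! ### Tree tensors -/

section Partition

variable {n : ℕ} {P : Finset (Finset (Fin n))} {B C : Finset (Fin n)}

theorem IsPartitionGe2.eq_of_mem (hP : IsPartitionGe2 n P) (hB : B ∈ P) (hC : C ∈ P) {i : Fin n}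
    (hiB : i ∈ B) (hiC : i ∈ C) : B = C :=
  (hP.1 i).unique ⟨hB, hiB⟩ ⟨hC, hiC⟩

theorem IsPartitionGe2.sum_eq {M : Type*} [AddCommMonoid M] (hP : IsPartitionGe2 n P)
    (g : Fin n → M) : ∑ i, g i = ∑ B ∈ P, ∑ i ∈ B, g i := by
  have hdisj : (P : Set (Finset (Fin n))).PairwiseDisjoint id := fun B hB C hC hBC ↦
    Finset.disjoint_left.mpr fun i hiB hiC ↦ hBC (hP.eq_of_mem hB hC hiB hiC)
  have hunion : P.biUnion id = Finset.univ := Finset.eq_univ_iff_forall.mpr fun i ↦ by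
    obtain ⟨B, hB, -⟩ := hP.1 i
    exact Finset.mem_biUnion.mpr ⟨B, hB⟩
  rw [← hunion, Finset.sum_biUnion hdisj]
  rfl

end Partition

section Tree

variable {n : ℕ} {κ : LinearMap.BilinForm ℚ sl2}

theorem blockVal_eq_listVal (x : Fin n → sl2) (B : Finset (Fin n)) :
    blockVal κ x B = listVal κ ((B.sort (· ≤ ·)).map x) := rfl

theorem blockVal_update_of_notMem {B : Finset (Fin n)} {i : Fin n} (hi : i ∉ B) (x : Fin n → sl2)
    (a : sl2) : blockVal κ (Function.update x i a) B = blockVal κ x B := by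
  rw [blockVal_eq_listVal, (B.sort_nodup _).map_update, if_neg (by simpa using hi),
    blockVal_eq_listVal]

theorem sum_blockVal_update_lie (hκ : κ.lieInvariant sl2) (y : sl2) (x : Fin n → sl2)
    (B : Finset (Fin n)) : ∑ i ∈ B, blockVal κ (Function.update x i ⁅y, x i⁆) B = 0 := by
  simpa only [Finset.sort_toFinset, ← blockVal_eq_listVal] using
    sum_listVal_map_update hκ y x (B.sort_nodup (· ≤ ·))

theorem mem_invariants_of_pairT_eq_prod_blockVal (hκ : κ.lieInvariant sl2) (hnd : κ.Nondegenerate)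
    {P : Finset (Finset (Fin n))} (hP : IsPartitionGe2 n P) {T : TP n}
    (hT : ∀ x : Fin n → sl2, pairT κ n x T = ∏ B ∈ P, blockVal κ x B) : T ∈ Invariants n := by
  refine (mem_invariants_iff hκ hnd).mpr fun y ↦ ?_
  ext x
  have hfactor : ∀ B ∈ P, ∀ i ∈ B, ∏ C ∈ P, blockVal κ (Function.update x i ⁅y, x i⁆) C =
      blockVal κ (Function.update x i ⁅y, x i⁆) B * ∏ C ∈ P.erase B, blockVal κ x C := by
    intro B hB i hi
    rw [← Finset.mul_prod_erase P _ hB]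
    congr 1
    refine Finset.prod_congr rfl fun C hC ↦ blockVal_update_of_notMem (fun hiC ↦ ?_) x _
    exact Finset.ne_of_mem_erase hC (hP.eq_of_mem (Finset.mem_of_mem_erase hC) hB hiC hi)
  have hblock : ∀ B ∈ P,
      ∑ i ∈ B, ∏ C ∈ P, blockVal κ (Function.update x i ⁅y, x i⁆) C = 0 := fun B hB ↦ by
    rw [Finset.sum_congr rfl (hfactor B hB), ← Finset.sum_mul, sum_blockVal_update_lie hκ, zero_mul]
  simp only [lie_form_apply, ← pairT_eq_pairForm, hT]
  rw [hP.sum_eq, Finset.sum_eq_zero hblock, neg_zero, zero_apply]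

end Tree

/-! ### The Riordan word of a partition -/

section WordOf

variable {n : ℕ} {P : Finset (Finset (Fin n))} {B : Finset (Fin n)}

open Classical in
/-- The word with letter `e` at the least element of each block, `f` at the greatest one, and `h`
elsewhere: its path goes up when a block opens and down when it closes. -/
def wordOf (P : Finset (Finset (Fin n))) (i : Fin n) : Letter :=
  if ∀ B ∈ P, i ∈ B → ∀ j ∈ B, i ≤ j then .e
  else if ∀ B ∈ P, i ∈ B → ∀ j ∈ B, j ≤ i then .f
  else .h

theorem wordOf_eq_e_iff (hP : IsPartitionGe2 n P) (hB : B ∈ P) {i : Fin n} (hi : i ∈ B) :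
    wordOf P i = .e ↔ ∀ j ∈ B, i ≤ j := by
  have hblock : (∀ C ∈ P, i ∈ C → ∀ j ∈ C, i ≤ j) ↔ ∀ j ∈ B, i ≤ j :=
    ⟨fun hall ↦ hall B hB hi, fun hmin C hC hiC ↦ hP.eq_of_mem hB hC hi hiC ▸ hmin⟩
  rw [wordOf, ← hblock]
  split_ifs with hmin
  · exact iff_of_true rfl hmin
  all_goals exact iff_of_false nofun hmin

theorem wordOf_eq_f_iff (hP : IsPartitionGe2 n P) (hB : B ∈ P) {i : Fin n} (hi : i ∈ B) :
    wordOf P i = .f ↔ ∀ j ∈ B, j ≤ i := by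
  have hblock : (∀ C ∈ P, i ∈ C → ∀ j ∈ C, j ≤ i) ↔ ∀ j ∈ B, j ≤ i :=
    ⟨fun hall ↦ hall B hB hi, fun hmax C hC hiC ↦ hP.eq_of_mem hB hC hi hiC ▸ hmax⟩
  obtain ⟨j, hj, hji⟩ := Finset.exists_mem_ne (hP.2 B hB) i
  have hnot : (∀ j ∈ B, j ≤ i) → ¬∀ C ∈ P, i ∈ C → ∀ j ∈ C, i ≤ j := fun hmax hmin ↦
    hji (le_antisymm (hmax j hj) (hmin B hB hi j hj))
  rw [← hblock] at hnot ⊢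
  rw [wordOf]
  split_ifs with hmin hmax
  · exact iff_of_false nofun fun hmax ↦ hnot hmax hmin
  · exact iff_of_true rfl hmax
  · exact iff_of_false nofun hmax

theorem wordOf_eq_h (hP : IsPartitionGe2 n P) (hB : B ∈ P) {a i b : Fin n} (ha : a ∈ B)
    (hi : i ∈ B) (hb : b ∈ B) (hai : a < i) (hib : i < b) : wordOf P i = .h := by
  have hne_e := (wordOf_eq_e_iff hP hB hi).not.mpr fun hmin ↦ (hmin a ha).not_gt hai
  have hne_f := (wordOf_eq_f_iff hP hB hi).not.mpr fun hmax ↦ (hmax b hb).not_gt hib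
  cases hw : wordOf P i
  exacts [absurd hw hne_e, rfl, absurd hw hne_f]

theorem wt_wordOf (hP : IsPartitionGe2 n P) (hB : B ∈ P) (hne : B.Nonempty) {i : Fin n}
    (hi : i ∈ B) : (wordOf P i).wt =
      (if B.min' hne = i then 1 else 0) - (if B.max' hne = i then 1 else 0) := by
  have he : wordOf P i = .e ↔ B.min' hne = i := by
    rw [wordOf_eq_e_iff hP hB hi, Finset.min'_eq_iff]
    exact (and_iff_right hi).symm
  have hf : wordOf P i = .f ↔ B.max' hne = i := by
    rw [wordOf_eq_f_iff hP hB hi, Finset.max'_eq_iff]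
    exact (and_iff_right hi).symm
  cases hw : wordOf P i <;> simp [← he, ← hf, hw, Letter.wt]

/-- Some element of `B` is below `k` and some element is at least `l`. The block is open after `k`
steps when it spans `k` and `k`, and covers the position `i` when it spans `i + 1` and `i`. -/
def Spans (B : Finset (Fin n)) (k l : ℕ) : Prop :=
  (∃ i ∈ B, i.val < k) ∧ ∃ j ∈ B, l ≤ j.val

theorem spans_iff (hne : B.Nonempty) {k l : ℕ} :
    Spans B k l ↔ (B.min' hne).val < k ∧ l ≤ (B.max' hne).val := by
  constructor
  · rintro ⟨⟨i, hi, hik⟩, j, hj, hlj⟩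
    exact ⟨(Fin.le_def.mp (B.min'_le i hi)).trans_lt hik, hlj.trans (B.le_max' j hj)⟩
  · rintro ⟨hmin, hmax⟩
    exact ⟨⟨_, B.min'_mem hne, hmin⟩, _, B.max'_mem hne, hmax⟩

open Classical in
theorem sum_wt_wordOf (hP : IsPartitionGe2 n P) (hB : B ∈ P) (k : ℕ) :
    ∑ i ∈ B with i.val < k, (wordOf P i).wt = if Spans B k k then 1 else 0 := by
  have hne : B.Nonempty := Finset.card_pos.mp (two_pos.trans_le (hP.2 B hB))
  have hlt : (B.min' hne).val < (B.max' hne).val := B.min'_lt_max'_of_card (hP.2 B hB)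
  have hwt : ∀ i ∈ B.filter (·.val < k), (wordOf P i).wt =
      (if B.min' hne = i then 1 else 0) - (if B.max' hne = i then 1 else 0) :=
    fun i hi ↦ wt_wordOf hP hB hne (Finset.mem_of_mem_filter i hi)
  simp only [Finset.sum_congr rfl hwt, Finset.sum_sub_distrib, Finset.sum_ite_eq,
    Finset.mem_filter, B.min'_mem hne, B.max'_mem hne, true_and, spans_iff hne]
  grind

theorem height_eq_sum_blocks (hP : IsPartitionGe2 n P) (w : Fin n → Letter) (k : ℕ) :
    height w k = ∑ B ∈ P, ∑ i ∈ B with i.val < k, (w i).wt := by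
  simp only [height, Finset.sum_filter, hP.sum_eq]

open Classical in
theorem height_wordOf (hP : IsPartitionGe2 n P) (k : ℕ) :
    height (wordOf P) k = ((P.filter (Spans · k k)).card : ℤ) := by
  rw [height_eq_sum_blocks hP, Finset.sum_congr rfl fun B hB ↦ sum_wt_wordOf hP hB k,
    Finset.sum_boole]

end WordOf

/-! ### Triangularity -/

theorem filter_prefix_of_pairwise {α : Type*} {r : α → α → Prop} {p : α → Prop} [DecidablePred p]
    (hp : ∀ a b, r a b → p b → p a) {l : List α} (hl : l.Pairwise r) : l.filter p <+: l := by
  induction l with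
  | nil => simp
  | cons a l ih =>
    obtain ⟨ha, hl⟩ := List.pairwise_cons.mp hl
    by_cases hpa : p a
    · rw [List.filter_cons_of_pos (by simpa using hpa)]
      exact List.cons_prefix_cons.mpr ⟨rfl, ih hl⟩
    · have hnone : (a :: l).filter p = [] := by
        simpa [hpa] using fun b hb hpb ↦ hpa (hp a b (ha b hb) hpb)
      simp [hnone]

section Triangular

variable {n : ℕ} {κ : LinearMap.BilinForm ℚ sl2} {w : Fin n → Letter}

theorem sum_filter_wt_eq_sum_sort (B : Finset (Fin n)) (k : ℕ) :
    ∑ i ∈ B with i.val < k, (w i).wt =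
      ((((B.sort (· ≤ ·)).filter (·.val < k)).map w).map Letter.wt).sum := by
  rw [List.map_map, ← List.sum_toFinset _ ((B.sort_nodup _).filter _), List.toFinset_filter,
    Finset.sort_toFinset]
  simp

open Classical in
theorem sum_filter_wt_le_of_blockVal_ne_zero (hκ : κ.lieInvariant sl2) {B : Finset (Fin n)}
    (hB : blockVal κ (fun i ↦ (w i).vec) B ≠ 0) (k : ℕ) :
    ∑ i ∈ B with i.val < k, (w i).wt ≤ if Spans B k k then 1 else 0 := by
  have hval : listVal κ (((B.sort (· ≤ ·)).map w).map Letter.vec) ≠ 0 := by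
    rwa [List.map_map]
  by_cases hlow : ∃ i ∈ B, i.val < k
  swap
  · rw [Finset.filter_eq_empty_iff.mpr fun i hi hik ↦ hlow ⟨i, hi, hik⟩, Finset.sum_empty]
    split_ifs <;> simp
  have hpre : (B.sort (· ≤ ·)).filter (·.val < k) <+: B.sort (· ≤ ·) :=
    filter_prefix_of_pairwise (fun i j hij hjk ↦ lt_of_le_of_lt (Fin.le_def.mp hij) hjk)
      (B.pairwise_sort (· ≤ ·))
  rw [sum_filter_wt_eq_sum_sort]
  by_cases hhigh : ∃ j ∈ B, k ≤ j.val
  · rw [if_pos ⟨hlow, hhigh⟩]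
    exact sum_wt_prefix_le_one hκ (hpre.map w) hval
  · have hall : (B.sort (· ≤ ·)).filter (·.val < k) = B.sort (· ≤ ·) := by
      simpa using hhigh
    rw [hall, sum_wt_eq_zero_of_listVal_ne_zero hκ hval]
    split_ifs <;> simp

theorem height_le_height_wordOf (hκ : κ.lieInvariant sl2) {P : Finset (Finset (Fin n))}
    (hP : IsPartitionGe2 n P) (hw : ∏ B ∈ P, blockVal κ (fun i ↦ (w i).vec) B ≠ 0) :
    height w ≤ height (wordOf P) := fun k ↦ by
  classical
  rw [height_eq_sum_blocks hP, height_eq_sum_blocks hP]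
  refine Finset.sum_le_sum fun B hB ↦ ?_
  rw [sum_wt_wordOf hP hB]
  exact sum_filter_wt_le_of_blockVal_ne_zero hκ (Finset.prod_ne_zero_iff.mp hw B hB) k

theorem exists_map_wordOf_sort {P : Finset (Finset (Fin n))} (hP : IsPartitionGe2 n P)
    {B : Finset (Fin n)} (hB : B ∈ P) :
    ∃ m, (B.sort (· ≤ ·)).map (wordOf P) = .e :: List.replicate m .h ++ [.f] := by
  obtain ⟨a, l, b, hsort⟩ : ∃ a l b, B.sort (· ≤ ·) = a :: l ++ [b] := by
    have hlen : 2 ≤ (B.sort (· ≤ ·)).length := by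
      simpa using hP.2 B hB
    rcases hs : B.sort (· ≤ ·) with _ | ⟨a, l⟩
    · simp [hs] at hlen
    rcases List.eq_nil_or_concat' l with rfl | ⟨l, b, rfl⟩
    · simp [hs] at hlen
    exact ⟨a, l, b, rfl⟩
  have hmem (i : Fin n) : i ∈ B ↔ i = a ∨ i ∈ l ∨ i = b := by
    rw [← Finset.mem_sort (· ≤ ·), hsort]
    simp
  have hlt : (a :: l ++ [b]).Pairwise (· < ·) := hsort ▸ B.sortedLT_sort.pairwise
  simp only [List.cons_append, List.pairwise_cons, List.pairwise_append, List.mem_append,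
    List.mem_singleton] at hlt
  obtain ⟨ha, -, -, hb⟩ := hlt
  have hwa : wordOf P a = .e := (wordOf_eq_e_iff hP hB (by simp [hmem])).mpr fun j hj ↦ by grind
  have hwb : wordOf P b = .f := (wordOf_eq_f_iff hP hB (by simp [hmem])).mpr fun j hj ↦ by grind
  have hwl : ∀ i ∈ l, wordOf P i = .h := fun i hi ↦
    wordOf_eq_h hP hB (by simp [hmem]) (by simp [hmem, hi]) (by simp [hmem])
      (ha i (.inl hi)) (hb i hi b rfl)
  refine ⟨l.length, ?_⟩
  rw [hsort, List.map_append, List.map_cons, List.map_singleton, hwa, hwb,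
    List.map_congr_left hwl, List.map_const']

theorem prod_blockVal_wordOf_ne_zero (hEF : κ E F ≠ 0) {P : Finset (Finset (Fin n))}
    (hP : IsPartitionGe2 n P) : ∏ B ∈ P, blockVal κ (fun i ↦ (wordOf P i).vec) B ≠ 0 := by
  refine Finset.prod_ne_zero_iff.mpr fun B hB ↦ ?_
  obtain ⟨m, hm⟩ := exists_map_wordOf_sort hP hB
  change listVal κ ((B.sort (· ≤ ·)).map (Letter.vec ∘ wordOf P)) ≠ 0
  rw [← List.map_map, hm]
  simpa [Letter.vec] using listVal_E_H_F_ne_zero hEF m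

end Triangular

/-! ### Levels of a Riordan word -/

section Level

variable {n : ℕ} {w : Fin n → Letter} {i j k l : Fin n}

/-- The height of the upper end of the `i`-th step. For the word of a non-crossing partition this
is the nesting depth of the block of `i`. -/
def level (w : Fin n → Letter) (i : Fin n) : ℤ := max (height w i) (height w (i + 1))

theorem level_eq_height (hi : w i ≠ .e) : level w i = height w i := by
  have hsucc := height_succ w i
  cases hw : w i <;> simp_all [level, Letter.wt]

theorem level_eq_height_succ (hi : w i ≠ .f) : level w i = height w (i + 1) := by
  have hsucc := height_succ w i
  cases hw : w i <;> simp_all [level, Letter.wt]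

theorem height_lt_level (hi : w i = .e) : height w i < level w i := by
  simp [level, height_succ, hi, Letter.wt]

theorem height_succ_lt_level (hi : w i = .f) : height w (i + 1) < level w i := by
  simp [level, height_succ, hi, Letter.wt]

theorem level_eq_of_height_lt_of_le {L : ℤ} (hlt : height w i < L) (hle : L ≤ height w (i + 1)) :
    level w i = L := by
  have hsucc := height_succ w i
  cases hw : w i <;> simp only [level, hw, Letter.wt] at hsucc ⊢ <;> lia

theorem level_eq_of_height_succ_lt_of_le {L : ℤ} (hlt : height w (i + 1) < L)
    (hle : L ≤ height w i) : level w i = L := by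
  have hsucc := height_succ w i
  cases hw : w i <;> simp only [level, hw, Letter.wt] at hsucc ⊢ <;> lia

theorem IsRiordanFrom.one_le_level (hw : IsRiordanFrom 0 w) (i : Fin n) : 1 ≤ level w i := by
  have hnonneg := hw.nonneg i
  have hnonneg' := hw.nonneg (i + 1)
  cases hwi : w i
  · have := height_lt_level hwi
    lia
  · have := hw.pos_of_eq_h i hwi
    rw [level_eq_height (by simp [hwi])]
    lia
  · have := height_succ_lt_level hwi
    lia

/-- Two steps are equivalent when they have the same level and the path does not go below that
level between them. -/
def levelSetoid (w : Fin n → Letter) : Setoid (Fin n) where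
  r i j := level w i = level w j ∧
    ∀ m : ℕ, min i.val j.val < m → m ≤ max i.val j.val → level w i ≤ height w m
  iseqv := by
    refine ⟨fun i ↦ ⟨rfl, fun m hlt hle ↦ by lia⟩, fun {i j} hij ↦ ⟨hij.1.symm, fun m hlt hle ↦ ?_⟩,
      fun {i j k} hij hjk ↦ ⟨hij.1.trans hjk.1, fun m hlt hle ↦ ?_⟩⟩
    · exact hij.1 ▸ hij.2 m (by lia) (by lia)
    · by_cases hm : min i.val j.val < m ∧ m ≤ max i.val j.val
      · exact hij.2 m hm.1 hm.2
      · exact hij.1 ▸ hjk.2 m (by lia) (by lia)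

theorem le_of_levelSetoid_of_eq_e (hi : w i = .e) (hij : levelSetoid w i j) : i ≤ j := by
  by_contra! hji
  rw [Fin.lt_def] at hji
  exact (hij.2 i (by lia) (by lia)).not_gt (height_lt_level hi)

theorem le_of_levelSetoid_of_eq_f (hi : w i = .f) (hij : levelSetoid w i j) : j ≤ i := by
  by_contra! hlt
  rw [Fin.lt_def] at hlt
  exact (hij.2 (i + 1) (by lia) (by lia)).not_gt (height_succ_lt_level hi)

theorem levelSetoid_of_crossing (hij : i < j) (hjk : j < k) (hkl : k < l)
    (hik : levelSetoid w i k) (hjl : levelSetoid w j l) : levelSetoid w j k := by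
  rw [Fin.lt_def] at hij hjk hkl
  have hi_le_j : level w i ≤ level w j := le_max_of_le_left (hik.2 j (by lia) (by lia))
  have hj_le_k : level w j ≤ level w k := le_max_of_le_left (hjl.2 k (by lia) (by lia))
  have hlevel : level w j = level w i := le_antisymm (hj_le_k.trans_eq hik.1.symm) hi_le_j
  exact ⟨hlevel.trans hik.1, fun m hlt hle ↦ hlevel ▸ hik.2 m (by lia) (by lia)⟩

theorem IsRiordanFrom.exists_gt_levelSetoid (hw : IsRiordanFrom 0 w) (hi : w i ≠ .f) :
    ∃ j, i < j ∧ levelSetoid w i j := by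
  have hlevel := level_eq_height_succ hi
  have hpos := hw.one_le_level i
  have hend : i.val < n ∧ height w n < level w i :=
    ⟨i.isLt, by have := hw.add_height_eq_zero; lia⟩
  have hex : ∃ m, i.val < m ∧ height w m < level w i := ⟨n, hend⟩
  obtain ⟨m, hfind⟩ : ∃ m, Nat.find hex = m + 1 :=
    Nat.exists_eq_succ_of_ne_zero ((Nat.zero_le i).trans_lt (Nat.find_spec hex).1).ne'
  obtain ⟨him, hlt⟩ : i.val < m + 1 ∧ height w (m + 1) < level w i := hfind ▸ Nat.find_spec hex
  have hmn : m < n := by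
    have := Nat.find_min' hex hend
    lia
  have habove (k : ℕ) (hik : i.val < k) (hkm : k ≤ m) : level w i ≤ height w k := by
    by_contra! hk
    exact Nat.find_min hex (hfind ▸ Nat.lt_succ_of_le hkm) ⟨hik, hk⟩
  have him' : i.val < m := by
    refine (Nat.lt_succ_iff.mp him).lt_of_ne fun heq ↦ ?_
    rw [hlevel, heq] at hlt
    exact lt_irrefl _ hlt
  have hlevel_m : level w ⟨m, hmn⟩ = level w i :=
    level_eq_of_height_succ_lt_of_le (i := ⟨m, hmn⟩) hlt (habove m him' le_rfl)
  refine ⟨⟨m, hmn⟩, him', hlevel_m.symm, fun k hlt hle ↦ habove k ?_ ?_⟩ <;> lia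

theorem IsRiordanFrom.exists_lt_levelSetoid (hw : IsRiordanFrom 0 w) (hi : w i ≠ .e) :
    ∃ j, j < i ∧ levelSetoid w i j := by
  classical
  have hlevel := level_eq_height hi
  have hstart : height w 0 < level w i := by
    rw [height_zero]
    exact hw.one_le_level i
  obtain ⟨m, hm⟩ : ∃ m, m = Nat.findGreatest (fun m ↦ height w m < level w i) i := ⟨_, rfl⟩
  have hlt : height w m < level w i :=
    hm ▸ Nat.findGreatest_spec (P := fun m ↦ height w m < level w i) (Nat.zero_le _) hstart
  have hmi : m < i.val := by
    refine (hm ▸ Nat.findGreatest_le _ : m ≤ i.val).lt_of_ne fun heq ↦ ?_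
    rw [hlevel, heq] at hlt
    exact lt_irrefl _ hlt
  have habove (k : ℕ) (hmk : m < k) (hki : k ≤ i) : level w i ≤ height w k :=
    not_lt.mp (Nat.findGreatest_is_greatest (hm ▸ hmk) hki)
  have hmn : m < n := hmi.trans i.isLt
  have hlevel_m : level w ⟨m, hmn⟩ = level w i :=
    level_eq_of_height_lt_of_le (i := ⟨m, hmn⟩) hlt (habove (m + 1) m.lt_succ_self hmi)
  refine ⟨⟨m, hmn⟩, hmi, hlevel_m.symm, fun k hlt hle ↦ habove k ?_ ?_⟩ <;> lia

end Level

/-! ### Riordan partitions and Riordan words -/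

section LevelPartition

variable {n : ℕ} {w : Fin n → Letter} {B : Finset (Fin n)} {i j : Fin n}

open Classical in
/-- The partition into classes of `levelSetoid w`; on Riordan words it is inverse to `wordOf`. -/
def levelPartition (w : Fin n → Letter) : Finset (Finset (Fin n)) :=
  (Finpartition.ofSetoid (levelSetoid w)).parts

theorem existsUnique_mem_levelPartition (w : Fin n → Letter) (i : Fin n) :
    ∃! B, B ∈ levelPartition w ∧ i ∈ B := by
  classical
  exact (Finpartition.ofSetoid _).existsUnique_mem (Finset.mem_univ i)

theorem mem_iff_of_mem_levelPartition (hB : B ∈ levelPartition w) (hi : i ∈ B) :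
    j ∈ B ↔ levelSetoid w i j := by
  classical
  rw [← (Finpartition.ofSetoid (levelSetoid w)).part_eq_of_mem hB hi]
  exact Finpartition.mem_part_ofSetoid_iff_rel

theorem nonempty_of_mem_levelPartition (hB : B ∈ levelPartition w) : B.Nonempty := by
  classical
  exact (Finpartition.ofSetoid _).nonempty_of_mem_parts hB

theorem IsRiordanFrom.isPartitionGe2_levelPartition (hw : IsRiordanFrom 0 w) :
    IsPartitionGe2 n (levelPartition w) := by
  refine ⟨existsUnique_mem_levelPartition w, fun B hB ↦ ?_⟩
  obtain ⟨i, hi⟩ := nonempty_of_mem_levelPartition hB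
  obtain ⟨j, hne, hij⟩ : ∃ j, i ≠ j ∧ levelSetoid w i j := by
    by_cases hf : w i = .f
    · obtain ⟨j, hji, hij⟩ := hw.exists_lt_levelSetoid (i := i) (by simp [hf])
      exact ⟨j, hji.ne', hij⟩
    · obtain ⟨j, hlt, hij⟩ := hw.exists_gt_levelSetoid hf
      exact ⟨j, hlt.ne, hij⟩
  exact Finset.one_lt_card.mpr ⟨i, hi, j, (mem_iff_of_mem_levelPartition hB hi).mpr hij, hne⟩

theorem isNonCrossing_levelPartition (w : Fin n → Letter) :
    IsNonCrossing n (levelPartition w) := by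
  rintro ⟨i, j, k, l, hij, hjk, hkl, B, hB, C, hC, hBC, hi, hk, hj, hl⟩
  have hrel : levelSetoid w j k := levelSetoid_of_crossing hij hjk hkl
    ((mem_iff_of_mem_levelPartition hB hi).mp hk) ((mem_iff_of_mem_levelPartition hC hj).mp hl)
  exact hBC ((existsUnique_mem_levelPartition w k).unique ⟨hB, hk⟩
    ⟨hC, (mem_iff_of_mem_levelPartition hC hj).mpr hrel⟩)

theorem IsRiordanFrom.wordOf_levelPartition (hw : IsRiordanFrom 0 w) :
    wordOf (levelPartition w) = w := by
  ext1 i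
  have hP := hw.isPartitionGe2_levelPartition
  obtain ⟨B, ⟨hB, hi⟩, -⟩ := hP.1 i
  have hmem (j : Fin n) : j ∈ B ↔ levelSetoid w i j := mem_iff_of_mem_levelPartition hB hi
  cases hwi : w i
  · exact (wordOf_eq_e_iff hP hB hi).mpr fun j hj ↦
      le_of_levelSetoid_of_eq_e hwi ((hmem j).mp hj)
  · obtain ⟨a, hai, ha⟩ := hw.exists_lt_levelSetoid (i := i) (by simp [hwi])
    obtain ⟨b, hib, hb⟩ := hw.exists_gt_levelSetoid (i := i) (by simp [hwi])
    exact wordOf_eq_h hP hB ((hmem a).mpr ha) hi ((hmem b).mpr hb) hai hib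
  · exact (wordOf_eq_f_iff hP hB hi).mpr fun j hj ↦
      le_of_levelSetoid_of_eq_f hwi ((hmem j).mp hj)

end LevelPartition

section WordOfRiordan

variable {n : ℕ} {P : Finset (Finset (Fin n))} {B C D : Finset (Fin n)} {i j : Fin n}

theorem Spans.mono {k k' l l' : ℕ} (hB : Spans B k l) (hk : k ≤ k') (hl : l' ≤ l) :
    Spans B k' l' := by
  obtain ⟨⟨a, ha, hak⟩, b, hb, hlb⟩ := hB
  exact ⟨⟨a, ha, hak.trans_le hk⟩, b, hb, hl.trans hlb⟩

theorem Spans.of_notMem (hB : Spans B (i + 1) i) (hi : i ∉ B) : Spans B i (i + 1) := by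
  obtain ⟨⟨a, ha, hai⟩, b, hb, hib⟩ := hB
  exact ⟨⟨a, ha, (Nat.lt_succ_iff.mp hai).lt_of_ne fun heq ↦ hi (Fin.ext heq ▸ ha)⟩,
    b, hb, hib.lt_of_ne fun heq ↦ hi (Fin.ext heq ▸ hb)⟩

open Classical in
theorem level_wordOf (hP : IsPartitionGe2 n P) (i : Fin n) :
    level (wordOf P) i = ((P.filter (Spans · (i + 1) i)).card : ℤ) := by
  obtain ⟨B, ⟨hB, hi⟩, -⟩ := hP.1 i
  obtain ⟨c, hc, hci⟩ := Finset.exists_mem_ne (hP.2 B hB) i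
  have hspans {k : ℕ} (hik : i.val ≤ k) (hki : k ≤ i + 1) (hBk : Spans B k k) :
      ∀ D ∈ P, Spans D (i + 1) i → Spans D k k := fun D hD hDi ↦ by
    by_cases hiD : i ∈ D
    · exact hP.eq_of_mem hB hD hi hiD ▸ hBk
    · exact (hDi.of_notMem hiD).mono hik hki
  rw [level, height_wordOf hP, height_wordOf hP]
  norm_cast
  refine le_antisymm (max_le ?_ ?_) (le_max_iff.mpr ?_)
  · exact Finset.card_mono (Finset.monotone_filter_right P fun D _ hD ↦ hD.mono (by lia) le_rfl)
  · exact Finset.card_mono (Finset.monotone_filter_right P fun D _ hD ↦ hD.mono le_rfl (by lia))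
  rcases hci.lt_or_gt with hlt | hgt
  · exact .inl (Finset.card_mono (Finset.monotone_filter_right P
      (hspans le_rfl (by lia) ⟨⟨c, hc, hlt⟩, i, hi, le_rfl⟩)))
  · exact .inr (Finset.card_mono (Finset.monotone_filter_right P
      (hspans (by lia) le_rfl ⟨⟨i, hi, by lia⟩, c, hc, hgt⟩)))

theorem IsRiordanPartition.spans_of_mem (hP : IsRiordanPartition n P) (hB : B ∈ P) (hi : i ∈ B)
    (hj : j ∈ B) (hD : D ∈ P) (hspans : Spans D (i + 1) i ∨ Spans D (j + 1) j) :
    Spans D (i + 1) j := by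
  by_cases hDB : D = B
  · subst hDB
    exact ⟨⟨i, hi, i.val.lt_succ_self⟩, j, hj, le_rfl⟩
  have hiD : i ∉ D := fun hiD ↦ hDB (hP.1.eq_of_mem hD hB hiD hi)
  have hjD : j ∉ D := fun hjD ↦ hDB (hP.1.eq_of_mem hD hB hjD hj)
  rcases hspans with hspans | hspans
  · obtain ⟨⟨a, ha, hai⟩, b, hb, hib⟩ := hspans.of_notMem hiD
    refine ⟨⟨a, ha, hai.trans i.val.lt_succ_self⟩, b, hb, ?_⟩
    by_contra! hbj
    exact hP.2 ⟨a, i, b, j, hai, hib, hbj, D, hD, B, hB, hDB, ha, hb, hi, hj⟩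
  · obtain ⟨⟨a, ha, haj⟩, b, hb, hjb⟩ := hspans.of_notMem hjD
    refine ⟨⟨a, ha, ?_⟩, b, hb, (Nat.le_succ _).trans hjb⟩
    by_contra! hia
    exact hP.2 ⟨i, a, j, b, hia, haj, hjb, B, hB, D, hD, Ne.symm hDB, hi, hj, ha, hb⟩

theorem IsRiordanPartition.levelSetoid_of_lt (hP : IsRiordanPartition n P) (hB : B ∈ P)
    (hi : i ∈ B) (hj : j ∈ B) (hij : i < j) : levelSetoid (wordOf P) i j := by
  classical
  have hspans {D : Finset (Fin n)} (hD : D ∈ P) := hP.spans_of_mem hB hi hj hD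
  rw [Fin.lt_def] at hij
  have hiff : ∀ D ∈ P, Spans D (i + 1) i ↔ Spans D (j + 1) j := fun D hD ↦
    ⟨fun hDi ↦ (hspans hD (.inl hDi)).mono (by lia) le_rfl,
      fun hDj ↦ (hspans hD (.inr hDj)).mono le_rfl hij.le⟩
  constructor
  · rw [level_wordOf hP.1, level_wordOf hP.1, Finset.filter_congr hiff]
  · intro m hlt hle
    rw [level_wordOf hP.1, height_wordOf hP.1]
    exact_mod_cast Finset.card_mono (Finset.monotone_filter_right P fun D hD hDi ↦
      (hspans hD (.inl hDi)).mono (by lia) (by lia))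

theorem IsRiordanPartition.levelSetoid_of_mem (hP : IsRiordanPartition n P) (hB : B ∈ P)
    (hi : i ∈ B) (hj : j ∈ B) : levelSetoid (wordOf P) i j := by
  rcases lt_trichotomy i j with hij | rfl | hji
  · exact hP.levelSetoid_of_lt hB hi hj hij
  · exact (levelSetoid _).refl i
  · exact (levelSetoid _).symm (hP.levelSetoid_of_lt hB hj hi hji)

-- The greatest element of `B` and the least element of `C` delimit the steps reachable from them
-- along the level, so otherwise `B` and `C` would cross.
theorem IsRiordanPartition.eq_of_levelSetoid_of_lt (hP : IsRiordanPartition n P) (hB : B ∈ P)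
    (hC : C ∈ P) (hi : i ∈ B) (hj : j ∈ C) (hij : i < j) (hrel : levelSetoid (wordOf P) i j) :
    B = C := by
  obtain ⟨b, hb, hmax⟩ := B.exists_max_image id ⟨i, hi⟩
  obtain ⟨c, hc, hmin⟩ := C.exists_min_image id ⟨j, hj⟩
  have hjb : j ≤ b := le_of_levelSetoid_of_eq_f ((wordOf_eq_f_iff hP.1 hB hb).mpr hmax)
    ((levelSetoid _).trans (hP.levelSetoid_of_mem hB hb hi) hrel)
  have hci : c ≤ i := le_of_levelSetoid_of_eq_e ((wordOf_eq_e_iff hP.1 hC hc).mpr hmin)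
    ((levelSetoid _).trans (hP.levelSetoid_of_mem hC hc hj) ((levelSetoid _).symm hrel))
  by_contra hBC
  have hjb' : j < b := hjb.lt_of_ne fun heq ↦ hBC (hP.1.eq_of_mem hB hC hb (heq ▸ hj))
  have hci' : c < i := hci.lt_of_ne fun heq ↦ hBC (hP.1.eq_of_mem hB hC hi (heq ▸ hc))
  exact hP.2 ⟨c, i, j, b, hci', hij, hjb', C, hC, B, hB, Ne.symm hBC, hc, hj, hi, hb⟩

theorem IsRiordanPartition.levelSetoid_iff (hP : IsRiordanPartition n P) (hB : B ∈ P)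
    (hi : i ∈ B) : levelSetoid (wordOf P) i j ↔ j ∈ B := by
  refine ⟨fun hrel ↦ ?_, hP.levelSetoid_of_mem hB hi⟩
  obtain ⟨C, ⟨hC, hj⟩, -⟩ := hP.1.1 j
  rcases lt_trichotomy i j with hij | rfl | hji
  · exact hP.eq_of_levelSetoid_of_lt hB hC hi hj hij hrel ▸ hj
  · exact hi
  · exact hP.eq_of_levelSetoid_of_lt hC hB hj hi hji ((levelSetoid _).symm hrel) ▸ hj

theorem IsRiordanPartition.levelPartition_wordOf (hP : IsRiordanPartition n P) :
    levelPartition (wordOf P) = P := by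
  have heq {B C : Finset (Fin n)} (hB : B ∈ levelPartition (wordOf P)) (hC : C ∈ P) {i : Fin n}
      (hiB : i ∈ B) (hiC : i ∈ C) : B = C := by
    ext j
    rw [mem_iff_of_mem_levelPartition hB hiB, hP.levelSetoid_iff hC hiC]
  ext B
  constructor
  · intro hB
    obtain ⟨i, hi⟩ := nonempty_of_mem_levelPartition hB
    obtain ⟨C, ⟨hC, hiC⟩, -⟩ := hP.1.1 i
    exact heq hB hC hi hiC ▸ hC
  · intro hB
    obtain ⟨i, hi⟩ := Finset.card_pos.mp (two_pos.trans_le (hP.1.2 B hB))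
    obtain ⟨C, ⟨hC, hiC⟩, -⟩ := existsUnique_mem_levelPartition (wordOf P) i
    exact heq hC hB hiC hi ▸ hC

theorem wordOf_injOn : Set.InjOn wordOf {P | IsRiordanPartition n P} :=
  Set.LeftInvOn.injOn (f₁' := levelPartition) fun _ hP ↦
    IsRiordanPartition.levelPartition_wordOf hP

end WordOfRiordan

/-! ### The tree basis -/

section TreeBasis

variable {κ : LinearMap.BilinForm ℚ sl2} {n : ℕ}
  {T : {P : Finset (Finset (Fin n)) // IsRiordanPartition n P} → TP n}

theorem linearIndependent_of_pairT_eq_prod_blockVal (hinv : κ.lieInvariant sl2) (hEF : κ E F ≠ 0)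
    (hT : ∀ P, ∀ x : Fin n → sl2, pairT κ n x (T P) = ∏ B ∈ P.1, blockVal κ x B) :
    LinearIndependent ℚ T := by
  refine linearIndependent_of_triangular
    (ℓ := fun P ↦ pairT κ n fun i ↦ (wordOf P.1 i).vec) (r := fun P ↦ height (wordOf P.1))
    (fun P Q hPQ ↦ ?_) (fun P ↦ ?_) (fun P Q hPQ ↦ ?_)
  · exact Subtype.ext (wordOf_injOn P.2 Q.2 (height_injective hPQ))
  · rw [hT]
    exact prod_blockVal_wordOf_ne_zero hEF P.2.1
  · rw [hT] at hPQ
    exact height_le_height_wordOf hinv Q.2.1 hPQ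

theorem eq_zero_of_mem_invariants_of_pairT_wordOf (hinv : κ.lieInvariant sl2)
    (hnd : κ.Nondegenerate) {t : TP n} (ht : t ∈ Invariants n)
    (hzero : ∀ P, IsRiordanPartition n P → pairT κ n (fun i ↦ (wordOf P i).vec) t = 0) :
    t = 0 := by
  refine eq_zero_of_mem_invariants hinv hnd ht fun w hw ↦ ?_
  rw [← hw.wordOf_levelPartition]
  exact hzero _ ⟨hw.isPartitionGe2_levelPartition, isNonCrossing_levelPartition w⟩

end TreeBasis

theorem tree_basis_of_invariants
    (κ : sl2 →ₗ[ℚ] sl2 →ₗ[ℚ] ℚ)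
    (hHH : κ H H = 2) (hEF : κ E F = 1) (hFE : κ F E = 1)
    (hHE : κ H E = 0) (hEH : κ E H = 0) (hHF : κ H F = 0) (hFH : κ F H = 0)
    (hEE : κ E E = 0) (hFF : κ F F = 0) :
    ∀ n, 2 ≤ n →
    ∀ T : {P : Finset (Finset (Fin n)) // IsRiordanPartition n P} → TP n,
      (∀ P, ∀ x : Fin n → sl2,
        pairT κ n x (T P) = ∏ B ∈ P.1, blockVal κ x B) →
      LinearIndependent ℚ T ∧ Submodule.span ℚ (Set.range T) = Invariants n := by
  intro n _ T hT
  obtain rfl : κ = sl2TraceForm := eq_sl2TraceForm <| by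
    rintro (_ | _ | _) (_ | _ | _) <;>
      simp only [Letter.vec, hHH, hEF, hFE, hHE, hEH, hHF, hFH, hEE, hFF] <;>
      norm_num [sl2TraceForm_apply, H, E, F, Matrix.trace_fin_two]
  have hinv := sl2TraceForm_lieInvariant
  have hnd := sl2TraceForm_nondegenerate
  have hindep : LinearIndependent ℚ T :=
    linearIndependent_of_pairT_eq_prod_blockVal hinv (hEF ▸ one_ne_zero) hT
  have hmem (P) : T P ∈ Invariants n :=
    mem_invariants_of_pairT_eq_prod_blockVal hinv hnd P.2.1 (hT P)
  refine ⟨hindep, span_range_eq_of_linearIndependent hindep hmem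
    (ℓ := fun P ↦ pairT sl2TraceForm n fun i ↦ (wordOf P.1 i).vec) fun t ht hzero ↦ ?_⟩
  exact eq_zero_of_mem_invariants_of_pairT_wordOf hinv hnd ht fun P hP ↦ hzero ⟨P, hP⟩
end
end

section
/- For n = 2 and for every odd n ≥ 3, the ℚ-linear span of {t_σ : σ ∈ Sₙ} equals all of Inv(sl₂^{⊗n}). (Equivalently, the homotopy sl₂ weight system W^h_n : 𝒞ₙ → Inv(sl₂^{⊗n}) is surjective for n odd and for n = 2.) -/
/- Surjectivity of the homotopy sl₂ weight system for n = 2 and n odd: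
   the ℚ-span of the tensors t_σ (σ ∈ Sₙ) — the κ-duals of the permuted
   iterated-bracket forms — equals all of Inv(sl₂^{⊗n}) when n = 2 or
   n ≥ 3 is odd.  κ and the family t are quantified via their defining
   properties. -/

open scoped TensorProduct

set_option synthInstance.maxHeartbeats 1000000
set_option maxHeartbeats 1000000

noncomputable section

/-- `κ([[⋯[x₁,x₂],⋯],x_{k-1}], x_k)`, read as `κ(x₁,x₂)` when `k = 2`. -/
def brkVal (κ : sl2 →ₗ[ℚ] sl2 →ₗ[ℚ] ℚ) {k : ℕ} (x : Fin k → sl2) : ℚ :=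
  κ (lBrk (List.ofFn x).dropLast) ((List.ofFn x).getLastD 0)

/-!
Pairing with the trace form `κ` turns invariant tensors into invariant multilinear forms and the
tensors `t_σ` into linear trees, so it suffices to write every invariant form `f` in `n` arguments
as a combination of linear trees.

Applying the Casimir element to the argument `x_j` multiplies `f` by `4`; moving one of its two
factors onto the other arguments by invariance gives
`2 f + ∑_{k ≠ j} f ∘ (j k) = ∑_{k ≠ j} κ(x_k, x_j) · c_{kj} f`, where `c_{kj} f` is an invariant
form in the remaining `n - 2` arguments. By induction `c_{kj} f` is a combination of linear trees,
and an `sl₂` identity absorbs the factor `κ(x_k, x_j)` into a tree with at least three leaves. For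
`n` odd the two-leaf tree never occurs, hence the right-hand side is a combination of linear trees;
for `n = 2` it is a multiple of the tree `κ(x_k, x_j)` itself.

Modulo trees, `2 + ∑_{k ≠ j} (j k)` therefore kills all invariant forms. If `q` is antisymmetric on
a set `S` of arguments, then `q - ∑_{i ∈ S} (i j) q` is antisymmetric on `S ∪ {j}`, and summing over
`j ∉ S` gives `(n + 2|S| - |S|²) q` modulo trees. For `|S| = 1, 2, 3` the coefficient is `n + 1`,
`n`, `n - 3`, and forms antisymmetric in four arguments vanish because `dim sl₂ = 3`. The
coefficient is zero only for `n = 3`, where an antisymmetric form is a multiple of the determinant,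
that is, of the tree `κ([x₁, x₂], x₃)`.
-/

section Descent

variable {K ι M : Type*} [Field K] [DecidableEq ι] [AddCommGroup M] [Module K M]

/-- `q` changes sign under every transposition of two elements of `S`. -/
def AntisymmOn (ρ : Representation K (Equiv.Perm ι) M) (S : Finset ι) (q : M) : Prop :=
  ∀ i ∈ S, ∀ j ∈ S, i ≠ j → ρ (Equiv.swap i j) q = -q

variable {ρ : Representation K (Equiv.Perm ι) M} {S : Finset ι} {q : M} {j : ι}

lemma antisymmOn_singleton (ρ : Representation K (Equiv.Perm ι) M) (i : ι) (q : M) :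
    AntisymmOn ρ {i} q := by
  intro a ha b hb hab
  exact absurd ((Finset.mem_singleton.1 ha).trans (Finset.mem_singleton.1 hb).symm) hab

lemma AntisymmOn.map_swap_sub_sum (hq : AntisymmOn ρ S q) (hj : j ∉ S) {a b : ι}
    (ha : a ∈ S) (hb : b ∈ S) (hab : a ≠ b) :
    ρ (Equiv.swap a b) (q - ∑ i ∈ S, ρ (Equiv.swap i j) q) =
      -(q - ∑ i ∈ S, ρ (Equiv.swap i j) q) := by
  have hconj (i : ι) : Equiv.swap a b * Equiv.swap i j =
      Equiv.swap (Equiv.swap a b i) j * Equiv.swap a b := by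
    rw [Equiv.mul_swap_eq_swap_mul, Equiv.swap_apply_of_ne_of_ne (x := j)] <;>
      rintro rfl <;> contradiction
  have hterm (i : ι) : ρ (Equiv.swap a b) (ρ (Equiv.swap i j) q) =
      -ρ (Equiv.swap (Equiv.swap a b i) j) q := by
    rw [← Module.End.mul_apply, ← map_mul, hconj, map_mul, Module.End.mul_apply,
      hq a ha b hb hab, map_neg]
  have hperm : ∑ i ∈ S, ρ (Equiv.swap (Equiv.swap a b i) j) q =
      ∑ i ∈ S, ρ (Equiv.swap i j) q := by
    refine Finset.sum_equiv (Equiv.swap a b) (fun i => ?_) fun _ _ => rfl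
    rcases eq_or_ne i a with rfl | hia
    · simp [ha, hb]
    rcases eq_or_ne i b with rfl | hib
    · simp [ha, hb]
    rw [Equiv.swap_apply_of_ne_of_ne hia hib]
  rw [map_sub, map_sum, hq a ha b hb hab]
  simp only [hterm, Finset.sum_neg_distrib, hperm]
  abel

lemma AntisymmOn.map_swap_new_sub_sum (hq : AntisymmOn ρ S q) (hj : j ∉ S) {a : ι}
    (ha : a ∈ S) :
    ρ (Equiv.swap a j) (q - ∑ i ∈ S, ρ (Equiv.swap i j) q) =
      -(q - ∑ i ∈ S, ρ (Equiv.swap i j) q) := by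
  have hself : ρ (Equiv.swap a j) (ρ (Equiv.swap a j) q) = q := by
    rw [← Module.End.mul_apply, ← map_mul, Equiv.swap_mul_self, map_one, Module.End.one_apply]
  have hterm : ∀ i ∈ S.erase a, ρ (Equiv.swap a j) (ρ (Equiv.swap i j) q) =
      -ρ (Equiv.swap i j) q := by
    intro i hi
    obtain ⟨hia, hiS⟩ := Finset.mem_erase.1 hi
    have hconj : Equiv.swap a j * Equiv.swap i j = Equiv.swap i j * Equiv.swap i a := by
      rw [Equiv.mul_swap_eq_swap_mul (Equiv.swap i j), Equiv.swap_apply_left,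
        Equiv.swap_apply_of_ne_of_ne hia.symm (by rintro rfl; contradiction), Equiv.swap_comm a j]
    rw [← Module.End.mul_apply, ← map_mul, hconj, map_mul, Module.End.mul_apply,
      hq i hiS a ha hia, map_neg]
  rw [← Finset.add_sum_erase S _ ha, map_sub, map_add, map_sum, hself,
    Finset.sum_congr rfl hterm, Finset.sum_neg_distrib]
  abel

lemma AntisymmOn.insert_sub_sum (hq : AntisymmOn ρ S q) (hj : j ∉ S) :
    AntisymmOn ρ (insert j S) (q - ∑ i ∈ S, ρ (Equiv.swap i j) q) := by
  intro a ha b hb hab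
  rcases Finset.mem_insert.1 ha with rfl | haS <;> rcases Finset.mem_insert.1 hb with rfl | hbS
  · exact absurd rfl hab
  · rw [Equiv.swap_comm]
    exact hq.map_swap_new_sub_sum hj hbS
  · exact hq.map_swap_new_sub_sum hj haS
  · exact hq.map_swap_sub_sum hj haS hbS hab

variable [Fintype ι] {P D : Submodule K M}

lemma AntisymmOn.sum_swap_eq (hq : AntisymmOn ρ S q) {i : ι} (hi : i ∈ S) :
    (2 : K) • q + ∑ k ∈ Finset.univ.erase i, ρ (Equiv.swap i k) q =
      (3 - S.card : K) • q + ∑ k ∈ Sᶜ, ρ (Equiv.swap i k) q := by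
  have hsplit : (Finset.univ.erase i : Finset ι) = S.erase i ∪ Sᶜ := by
    ext k
    rcases eq_or_ne k i with rfl | hki
    · simp [hi]
    · simp [hki, em]
  have hdisj : Disjoint (S.erase i) Sᶜ :=
    Finset.disjoint_of_subset_left (S.erase_subset i) disjoint_compl_right
  have hin : ∑ k ∈ S.erase i, ρ (Equiv.swap i k) q = -((S.card - 1 : K) • q) := by
    rw [Finset.sum_congr rfl fun k hk => hq i hi k (Finset.mem_of_mem_erase hk)
      (Finset.ne_of_mem_erase hk).symm, Finset.sum_const, Finset.card_erase_of_mem hi, smul_neg,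
      ← Nat.cast_smul_eq_nsmul K, Nat.cast_sub (Finset.card_pos.2 ⟨i, hi⟩), Nat.cast_one]
  rw [hsplit, Finset.sum_union hdisj, hin]
  module

theorem AntisymmOn.mem_of_insert (hP : ∀ σ, ∀ p ∈ P, ρ σ p ∈ P)
    (hcas : ∀ p ∈ P, ∀ i,
      (2 : K) • p + ∑ k ∈ Finset.univ.erase i, ρ (Equiv.swap i k) p ∈ D)
    (hnext : ∀ j ∉ S, ∀ p ∈ P, AntisymmOn ρ (insert j S) p → p ∈ D)
    (hcard : (Fintype.card ι + 2 * S.card - S.card ^ 2 : K) ≠ 0)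
    (hqP : q ∈ P) (hq : AntisymmOn ρ S q) : q ∈ D := by
  have hout : ∑ j ∈ Sᶜ, (q - ∑ i ∈ S, ρ (Equiv.swap i j) q) ∈ D :=
    D.sum_mem fun j hj => hnext j (Finset.mem_compl.1 hj) _
      (P.sub_mem hqP (P.sum_mem fun i _ => hP _ _ hqP))
      (hq.insert_sub_sum (Finset.mem_compl.1 hj))
  have hin : ∑ i ∈ S, ((3 - S.card : K) • q + ∑ k ∈ Sᶜ, ρ (Equiv.swap i k) q) ∈ D :=
    D.sum_mem fun i hi => hq.sum_swap_eq hi ▸ hcas q hqP i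
  have hsum := D.add_mem hout hin
  rw [Finset.sum_sub_distrib, Finset.sum_add_distrib, Finset.sum_comm (s := Sᶜ),
    Finset.sum_const, Finset.sum_const, Finset.card_compl, ← Nat.cast_smul_eq_nsmul K,
    ← Nat.cast_smul_eq_nsmul K, Nat.cast_sub S.card_le_univ] at hsum
  rw [← D.smul_mem_iff hcard]
  convert hsum using 1
  module

theorem le_of_antisymmOn_card_three_mem [CharZero K] [Nonempty ι]
    (hP : ∀ σ, ∀ p ∈ P, ρ σ p ∈ P)
    (hcas : ∀ p ∈ P, ∀ i,
      (2 : K) • p + ∑ k ∈ Finset.univ.erase i, ρ (Equiv.swap i k) p ∈ D)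
    (hthree : ∀ S : Finset ι, S.card = 3 → ∀ p ∈ P, AntisymmOn ρ S p → p ∈ D) : P ≤ D := by
  have hcard_ne : (Fintype.card ι : K) ≠ 0 := Nat.cast_ne_zero.2 Fintype.card_ne_zero
  have htwo (S : Finset ι) (hS : S.card = 2) (p : M) (hp : p ∈ P) (hpS : AntisymmOn ρ S p) :
      p ∈ D := by
    refine hpS.mem_of_insert hP hcas (fun j hj => hthree _ ?_) ?_ hp
    · rw [Finset.card_insert_of_notMem hj, hS]
    · rw [hS]
      convert hcard_ne using 1
      push_cast
      ring
  intro p hp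
  obtain ⟨i⟩ := ‹Nonempty ι›
  refine (antisymmOn_singleton ρ i p).mem_of_insert hP hcas (fun j hj => htwo _ ?_) ?_ hp
  · rw [Finset.card_insert_of_notMem hj, Finset.card_singleton]
  · rw [Finset.card_singleton]
    convert Nat.cast_add_one_ne_zero (R := K) (Fintype.card ι) using 1
    push_cast
    ring

end Descent

section Forms

variable (R ι V : Type*) [CommRing R] [AddCommGroup V] [Module R V]

/-- The representation of `Perm ι` on multilinear forms that permutes the arguments:
`σ` sends `f` to `x ↦ f (x ∘ σ)`. -/
def formPerm : Representation R (Equiv.Perm ι) (MultilinearMap R (fun _ : ι => V) R) where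
  toFun σ := (MultilinearMap.domDomCongrLinearEquiv R R V R σ).toLinearMap
  map_one' := rfl
  map_mul' _ _ := rfl

variable {R ι V}

lemma formPerm_apply (σ : Equiv.Perm ι) (f : MultilinearMap R (fun _ : ι => V) R) (x : ι → V) :
    formPerm R ι V σ f x = f (x ∘ σ) :=
  rfl

variable {K : Type*} [Field K] [Module K V] [DecidableEq ι] {S : Finset ι}
  {f : MultilinearMap K (fun _ : ι => V) K}

lemma AntisymmOn.apply_eq_zero_of_eq [NeZero (2 : K)] (hf : AntisymmOn (formPerm K ι V) S f)
    {x : ι → V} {i j : ι} (hi : i ∈ S) (hj : j ∈ S) (hij : i ≠ j) (hx : x i = x j) : f x = 0 := by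
  have hfix : x ∘ Equiv.swap i j = x := by
    rw [Equiv.comp_swap_eq_update, hx, Function.update_eq_self, ← hx, Function.update_eq_self]
  have hneg : f x = -f x := by
    have h := congr($(hf i hi j hj hij) x)
    rwa [formPerm_apply, hfix, neg_apply] at h
  have htwo : 2 * f x = 0 := by linear_combination hneg
  exact (mul_eq_zero.1 htwo).resolve_left two_ne_zero

lemma AntisymmOn.eq_zero_of_finrank_lt [NeZero (2 : K)] [FiniteDimensional K V]
    (hf : AntisymmOn (formPerm K ι V) S f) (hS : Module.finrank K V < S.card) : f = 0 := by
  ext x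
  let g : V [⋀^S]→ₗ[K] K :=
    { f.domDomRestrict (· ∈ S) fun i => x i with
      map_eq_zero_of_eq' := fun y i j hy hij =>
        hf.apply_eq_zero_of_eq i.2 j.2 (Subtype.coe_ne_coe.2 hij) (by simpa using hy) }
  have hdep : ¬LinearIndependent K fun i : S => x i := fun h =>
    hS.not_ge (by simpa using h.fintype_card_le_finrank)
  have hg : g (fun i => x i) = f x := congrArg f (by ext; simp)
  rw [← hg, g.map_linearDependent _ hdep, zero_apply]

end Forms

section InvariantForms

variable (R ι L : Type*) [CommRing R] [LieRing L] [LieAlgebra R L] [Fintype ι] [DecidableEq ι]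

/-- The multilinear forms on a Lie algebra killed by the (dual) derivation action of every
element. -/
def invariantForms : Submodule R (MultilinearMap R (fun _ : ι => L) R) where
  carrier := {f | ∀ (a : L) (x : ι → L), ∑ k, f (Function.update x k ⁅a, x k⁆) = 0}
  zero_mem' a x := by simp
  add_mem' hf hg a x := by simp [Finset.sum_add_distrib, hf a x, hg a x]
  smul_mem' c f hf a x := by simp [← Finset.mul_sum, hf a x]

variable {R ι L} {f : MultilinearMap R (fun _ : ι => L) R}

lemma formPerm_mem_invariantForms (σ : Equiv.Perm ι) (hf : f ∈ invariantForms R ι L) :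
    formPerm R ι L σ f ∈ invariantForms R ι L := by
  intro a x
  rw [← hf a (x ∘ σ), ← Equiv.sum_comp σ]
  simp only [formPerm_apply, Function.update_comp_equiv, Equiv.symm_apply_apply,
    Function.comp_apply]

end InvariantForms

section SpecialLinear

lemma sl2_apply_one_one_s10 (v : sl2) : v.1 1 1 = -v.1 0 0 := by
  have h : Matrix.trace v.1 = 0 := v.2
  rw [Matrix.trace_fin_two] at h
  linarith

lemma sl2_ext {u v : sl2} (hE : u.1 0 1 = v.1 0 1) (hH : u.1 0 0 = v.1 0 0)
    (hF : u.1 1 0 = v.1 1 0) : u = v := by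
  ext i j
  fin_cases i <;> fin_cases j
  · exact hH
  · exact hE
  · exact hF
  · exact (sl2_apply_one_one_s10 u).trans (hH ▸ (sl2_apply_one_one_s10 v).symm)

lemma lie_apply_zero_one (u v : sl2) :
    (⁅u, v⁆ : sl2).1 0 1 = 2 * (u.1 0 0 * v.1 0 1 - u.1 0 1 * v.1 0 0) := by
  rw [LieAlgebra.SpecialLinear.sl_bracket]
  simp only [Matrix.sub_apply, Matrix.mul_apply, Fin.sum_univ_two, sl2_apply_one_one_s10]
  ring

lemma lie_apply_zero_zero (u v : sl2) :
    (⁅u, v⁆ : sl2).1 0 0 = u.1 0 1 * v.1 1 0 - u.1 1 0 * v.1 0 1 := by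
  rw [LieAlgebra.SpecialLinear.sl_bracket]
  simp only [Matrix.sub_apply, Matrix.mul_apply, Fin.sum_univ_two]
  ring

lemma lie_apply_one_zero (u v : sl2) :
    (⁅u, v⁆ : sl2).1 1 0 = 2 * (u.1 1 0 * v.1 0 0 - u.1 0 0 * v.1 1 0) := by
  rw [LieAlgebra.SpecialLinear.sl_bracket]
  simp only [Matrix.sub_apply, Matrix.mul_apply, Fin.sum_univ_two, sl2_apply_one_one_s10]
  ring

/-- The basis `(E, H, F)` of `sl₂`. -/
def sl2Basis : Module.Basis (Fin 3) ℚ sl2 :=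
  .ofEquivFun
    { toFun v := ![v.1 0 1, v.1 0 0, v.1 1 0]
      invFun c := c 0 • E + c 1 • H + c 2 • F
      map_add' u v := by simp
      map_smul' r v := by simp
      left_inv v := by apply sl2_ext <;> simp [E, H, F]
      right_inv c := by ext i; fin_cases i <;> simp [E, H, F] }

lemma sl2Basis_equivFun (v : sl2) : sl2Basis.equivFun v = ![v.1 0 1, v.1 0 0, v.1 1 0] := by
  rw [sl2Basis, Module.Basis.equivFun_ofEquivFun]
  rfl

lemma coe_sl2Basis : ⇑sl2Basis = ![E, H, F] := by
  ext b : 1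
  fin_cases b <;> simp [sl2Basis]

lemma eq_coord_smul_add (v : sl2) : v = v.1 0 1 • E + v.1 0 0 • H + v.1 1 0 • F := by
  apply sl2_ext <;> simp [E, H, F]

/-- The trace form `κ(u, v) = tr(uv)` of `sl₂`. -/
def traceForm : sl2 →ₗ[ℚ] sl2 →ₗ[ℚ] ℚ :=
  LinearMap.mk₂ ℚ (fun u v => Matrix.trace (u.1 * v.1))
    (by simp [add_mul]) (by simp) (by simp [mul_add]) (by simp)

lemma traceForm_apply (u v : sl2) :
    traceForm u v = u.1 0 1 * v.1 1 0 + u.1 1 0 * v.1 0 1 + 2 * (u.1 0 0 * v.1 0 0) := by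
  simp only [traceForm, LinearMap.mk₂_apply, Matrix.trace_fin_two, Matrix.mul_apply,
    Fin.sum_univ_two, sl2_apply_one_one_s10]
  ring

lemma traceForm_lie_left (a u v : sl2) : traceForm ⁅a, u⁆ v = -traceForm u ⁅a, v⁆ := by
  simp only [traceForm_apply, lie_apply_zero_one, lie_apply_zero_zero, lie_apply_one_zero]
  ring

/-- The family `(F, H/2, E)` in `sl₂`, dual to `sl2Basis` under the trace form. -/
def sl2DualBasis : Fin 3 → sl2 := ![F, (1 / 2 : ℚ) • H, E]

lemma traceForm_sl2DualBasis (v : sl2) (b : Fin 3) :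
    traceForm v (sl2DualBasis b) = sl2Basis.repr v b := by
  rw [← Module.Basis.equivFun_apply, sl2Basis_equivFun]
  fin_cases b <;> simp [traceForm_apply, sl2DualBasis, E, H, F]

lemma eq_traceForm {κ : sl2 →ₗ[ℚ] sl2 →ₗ[ℚ] ℚ}
    (hHH : κ H H = 2) (hEF : κ E F = 1) (hFE : κ F E = 1)
    (hHE : κ H E = 0) (hEH : κ E H = 0) (hHF : κ H F = 0) (hFH : κ F H = 0)
    (hEE : κ E E = 0) (hFF : κ F F = 0) : κ = traceForm := by
  refine sl2Basis.ext fun b => sl2Basis.ext fun c => ?_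
  rw [coe_sl2Basis]
  fin_cases b <;> fin_cases c <;> simp [traceForm_apply, *] <;> simp [E, H, F]

lemma lie_E (v : sl2) : ⁅E, v⁆ = v.1 1 0 • H - (2 * v.1 0 0) • E := by
  apply sl2_ext <;> simp only [lie_apply_zero_one, lie_apply_zero_zero, lie_apply_one_zero] <;>
    simp [E, H]

lemma lie_H (v : sl2) : ⁅H, v⁆ = (2 * v.1 0 1) • E - (2 * v.1 1 0) • F := by
  apply sl2_ext <;> simp only [lie_apply_zero_one, lie_apply_zero_zero, lie_apply_one_zero] <;>
    simp [E, H, F]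

lemma lie_F (v : sl2) : ⁅F, v⁆ = (2 * v.1 0 0) • F - v.1 0 1 • H := by
  apply sl2_ext <;> simp only [lie_apply_zero_one, lie_apply_zero_zero, lie_apply_one_zero] <;>
    simp [H, F]

lemma sum_sl2Basis_sl2DualBasis {M : Type*} [AddCommMonoid M] (φ : sl2 → sl2 → M) :
    ∑ b, φ (sl2Basis b) (sl2DualBasis b) = φ E F + φ H ((1 / 2 : ℚ) • H) + φ F E := by
  rw [coe_sl2Basis, Fin.sum_univ_three]
  rfl

lemma sum_lie_lie_sl2DualBasis (y : sl2) :
    ∑ b, ⁅sl2Basis b, ⁅sl2DualBasis b, y⁆⁆ = (4 : ℚ) • y := by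
  rw [sum_sl2Basis_sl2DualBasis fun u v => ⁅u, ⁅v, y⁆⁆, smul_lie, lie_smul]
  conv_rhs => rw [eq_coord_smul_add y]
  rw [lie_E, lie_E, lie_H, lie_H, lie_F, lie_F]
  simp only [E, H, F, AddSubgroupClass.coe_sub, SetLike.val_smul, Matrix.sub_apply,
    Matrix.smul_apply, Matrix.of_apply, Matrix.cons_val', Matrix.cons_val_zero,
    Matrix.cons_val_one, Matrix.cons_val_fin_one, smul_eq_mul]
  module

lemma sum_apply_lie_lie (B : sl2 →ₗ[ℚ] sl2 →ₗ[ℚ] ℚ) (x y : sl2) :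
    ∑ b, B ⁅sl2Basis b, x⁆ ⁅sl2DualBasis b, y⁆ =
      2 * B y x - 2 * traceForm x y * ∑ b, B (sl2Basis b) (sl2DualBasis b) := by
  rw [sum_sl2Basis_sl2DualBasis fun u v => B u v,
    sum_sl2Basis_sl2DualBasis fun u v => B ⁅u, x⁆ ⁅v, y⁆, traceForm_apply]
  have hyx : B y x = B (y.1 0 1 • E + y.1 0 0 • H + y.1 1 0 • F)
      (x.1 0 1 • E + x.1 0 0 • H + x.1 1 0 • F) := by
    rw [← eq_coord_smul_add, ← eq_coord_smul_add]
  rw [hyx]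
  simp only [smul_lie, lie_E, lie_H, lie_F, map_add, map_sub, map_smul, LinearMap.add_apply,
    LinearMap.sub_apply, LinearMap.smul_apply, smul_eq_mul]
  ring

lemma sum_apply_lie_add_apply_lie (B : sl2 →ₗ[ℚ] sl2 →ₗ[ℚ] ℚ) (a : sl2) :
    ∑ b, (B ⁅a, sl2Basis b⁆ (sl2DualBasis b) + B (sl2Basis b) ⁅a, sl2DualBasis b⁆) = 0 := by
  rw [sum_sl2Basis_sl2DualBasis fun u v => B ⁅a, u⁆ v + B u ⁅a, v⁆]
  simp only [← lie_skew a, smul_lie, lie_E, lie_H, lie_F, map_sub, map_smul, map_neg,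
    LinearMap.sub_apply, LinearMap.neg_apply, LinearMap.smul_apply, smul_eq_mul]
  ring

lemma traceForm_smul_lie (a b x y : sl2) :
    traceForm a b • ⁅x, y⁆ = (1 / 4 : ℚ) •
      (⁅⁅⁅x, a⁆, b⁆, y⁆ + ⁅⁅⁅x, b⁆, a⁆, y⁆ + ⁅⁅⁅x, y⁆, a⁆, b⁆ + ⁅⁅⁅x, y⁆, b⁆, a⁆
        - ⁅⁅⁅x, a⁆, y⁆, b⁆ - ⁅⁅⁅x, b⁆, y⁆, a⁆) := by
  apply sl2_ext <;>
    simp only [AddMemClass.coe_add, AddSubgroupClass.coe_sub, SetLike.val_smul,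
      Matrix.add_apply, Matrix.sub_apply, Matrix.smul_apply, smul_eq_mul, traceForm_apply,
      lie_apply_zero_one, lie_apply_zero_zero, lie_apply_one_zero] <;>
    ring

end SpecialLinear

section Contraction

variable {ι : Type*} [DecidableEq ι]

/-- The bilinear form obtained from a multilinear form by freeing its arguments `i` and `j`. -/
def bilinAt {R V : Type*} [CommRing R] [AddCommGroup V] [Module R V]
    (f : MultilinearMap R (fun _ : ι => V) R) (x : ι → V) {i j : ι} (hij : i ≠ j) :
    V →ₗ[R] V →ₗ[R] R :=
  LinearMap.mk₂ R (fun u v => f (Function.update (Function.update x i u) j v))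
    (fun u u' v => by simp only [Function.update_comm hij, f.map_update_add])
    (fun c u v => by simp only [Function.update_comm hij, f.map_update_smul])
    (fun u v v' => f.map_update_add _ _ _ _) (fun c u v => f.map_update_smul _ _ _ _)

/-- The form in the remaining arguments obtained by inserting the Casimir element
`∑ b, sl2Basis b ⊗ sl2DualBasis b` into the distinct arguments `i` and
`j` of `f`. -/
def contraction (f : MultilinearMap ℚ (fun _ : ι => sl2) ℚ) (i j : ι) :
    MultilinearMap ℚ (fun _ : {k // k ≠ i ∧ k ≠ j} => sl2) ℚ :=
  ∑ b, f.domDomRestrict (fun k => k ≠ i ∧ k ≠ j)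
    fun k => if k = i then sl2Basis b else sl2DualBasis b

variable {f : MultilinearMap ℚ (fun _ : ι => sl2) ℚ} {i j : ι}

lemma contraction_apply (hij : i ≠ j) (x : ι → sl2) :
    contraction f i j (fun k => x k) =
      ∑ b, bilinAt f x hij (sl2Basis b) (sl2DualBasis b) := by
  simp only [contraction, sum_apply, MultilinearMap.domDomRestrict_apply]
  refine Finset.sum_congr rfl fun b _ => congrArg f ?_
  ext1 k
  grind

variable [Fintype ι]

lemma sum_eq_add_add_sum_subtype {M : Type*} [AddCommMonoid M] (hij : i ≠ j) (g : ι → M) :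
    ∑ k, g k = g i + g j + ∑ k : {k // k ≠ i ∧ k ≠ j}, g k := by
  rw [← Finset.add_sum_erase _ g (Finset.mem_univ i),
    ← Finset.add_sum_erase _ g (Finset.mem_erase.2 ⟨hij.symm, Finset.mem_univ j⟩), ← add_assoc,
    Finset.sum_subtype _ (p := fun k => k ≠ i ∧ k ≠ j) (by simp [and_comm])]

lemma contraction_mem_invariantForms (hf : f ∈ invariantForms ℚ ι sl2) (hij : i ≠ j) :
    contraction f i j ∈ invariantForms ℚ {k // k ≠ i ∧ k ≠ j} sl2 := by
  intro a y
  let x : ι → sl2 := fun k => if h : k ≠ i ∧ k ≠ j then y ⟨k, h⟩ else 0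
  let z (b : Fin 3) : ι → sl2 :=
    Function.update (Function.update x i (sl2Basis b)) j (sl2DualBasis b)
  have hterm (k : {k // k ≠ i ∧ k ≠ j}) : contraction f i j (Function.update y k ⁅a, y k⁆) =
      ∑ b, f (Function.update (z b) k ⁅a, z b k⁆) := by
    have hy : Function.update y k ⁅a, y k⁆ =
        fun l : {k // k ≠ i ∧ k ≠ j} => Function.update x k ⁅a, y k⁆ l := by
      ext1 l
      grind
    rw [hy, contraction_apply hij]
    refine Finset.sum_congr rfl fun b _ => congrArg f ?_
    grind
  have hinv (b : Fin 3) : ∑ k : {k // k ≠ i ∧ k ≠ j}, f (Function.update (z b) k ⁅a, z b k⁆) =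
      -(bilinAt f x hij ⁅a, sl2Basis b⁆ (sl2DualBasis b) +
        bilinAt f x hij (sl2Basis b) ⁅a, sl2DualBasis b⁆) := by
    have h := hf a (z b)
    rw [sum_eq_add_add_sum_subtype hij] at h
    rw [eq_neg_of_add_eq_zero_right h]
    exact congrArg Neg.neg (congrArg₂ _ (congrArg f (by grind)) (congrArg f (by grind)))
  rw [Finset.sum_congr rfl fun k _ => hterm k, Finset.sum_comm,
    Finset.sum_congr rfl fun b _ => hinv b, Finset.sum_neg_distrib, sum_apply_lie_add_apply_lie,
    neg_zero]

theorem two_mul_add_sum_comp_swap (hf : f ∈ invariantForms ℚ ι sl2) (j : ι) (x : ι → sl2) :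
    2 * f x + ∑ k ∈ Finset.univ.erase j, f (x ∘ Equiv.swap j k) =
      ∑ k ∈ Finset.univ.erase j, traceForm (x k) (x j) * contraction f k j (fun l => x l) := by
  have hinv (b : Fin 3) : f (Function.update x j ⁅sl2Basis b, ⁅sl2DualBasis b, x j⁆⁆) =
      -∑ k ∈ Finset.univ.erase j, f (Function.update (Function.update x k ⁅sl2Basis b, x k⁆) j
        ⁅sl2DualBasis b, x j⁆) := by
    have h := hf (sl2Basis b) (Function.update x j ⁅sl2DualBasis b, x j⁆)
    rw [← Finset.add_sum_erase _ _ (Finset.mem_univ j), Function.update_self,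
      Function.update_idem] at h
    rw [eq_neg_of_add_eq_zero_left h]
    congr 1
    refine Finset.sum_congr rfl fun k hk => ?_
    have hkj := Finset.ne_of_mem_erase hk
    rw [Function.update_of_ne hkj, Function.update_comm hkj]
  have hcasimir : 4 * f x =
      ∑ b, f (Function.update x j ⁅sl2Basis b, ⁅sl2DualBasis b, x j⁆⁆) := by
    rw [← f.map_update_sum, sum_lie_lie_sl2DualBasis, f.map_update_smul, Function.update_eq_self,
      smul_eq_mul]
  have hbilin : ∀ k ∈ Finset.univ.erase j,
      ∑ b, f (Function.update (Function.update x k ⁅sl2Basis b, x k⁆) j ⁅sl2DualBasis b, x j⁆) =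
      2 * f (x ∘ Equiv.swap j k) -
        2 * (traceForm (x k) (x j) * contraction f k j (fun l => x l)) := by
    intro k hk
    have hkj := Finset.ne_of_mem_erase hk
    rw [contraction_apply hkj, ← mul_assoc, Equiv.comp_swap_eq_update]
    exact sum_apply_lie_lie (bilinAt f x hkj) (x k) (x j)
  simp only [hinv] at hcasimir
  rw [Finset.sum_neg_distrib, Finset.sum_comm, Finset.sum_congr rfl hbilin,
    Finset.sum_sub_distrib, ← Finset.mul_sum, ← Finset.mul_sum] at hcasimir
  linarith

end Contraction

section LinearTrees

/-- The linear map `a ↦ [⋯[[a, z₁], z₂]⋯, z_k]` attached to a list `z₁, …, z_k`. -/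
def iterLie : List sl2 → sl2 →ₗ[ℚ] sl2
  | [] => LinearMap.id
  | z :: c => iterLie c ∘ₗ (-LieAlgebra.ad ℚ sl2 z)

lemma iterLie_apply (c : List sl2) (a : sl2) : iterLie c a = lBrk (a :: c) := by
  induction c generalizing a with
  | nil => rfl
  | cons z c ih =>
    rw [iterLie, LinearMap.comp_apply, ih, LinearMap.neg_apply, LieAlgebra.ad_apply, lie_skew]
    rfl

lemma lBrk_concat {l : List sl2} (hl : l ≠ []) (z : sl2) : lBrk (l ++ [z]) = ⁅lBrk l, z⁆ := by
  obtain ⟨a, c, rfl⟩ := List.exists_cons_of_ne_nil hl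
  exact List.foldl_concat _ _ _ _

variable {ι : Type*}

/-- The value `κ([⋯[[x_{l₁}, x_{l₂}], x_{l₃}]⋯], x_{l_k})` of the linear tree with leaves labelled
by `l₁, …, l_k`; it is `0` when there are fewer than two leaves. -/
def linTree (l : List ι) (x : ι → sl2) : ℚ :=
  traceForm (lBrk (l.map x).dropLast) ((l.map x).getLastD 0)

lemma linTree_concat (l : List ι) (m : ι) (x : ι → sl2) :
    linTree (l ++ [m]) x = traceForm (lBrk (l.map x)) (x m) := by
  simp [linTree]

lemma linTree_cons_concat (p m : ι) (c : List ι) (x : ι → sl2) :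
    linTree (p :: c ++ [m]) x = traceForm (iterLie (c.map x) (x p)) (x m) := by
  rw [linTree_concat, iterLie_apply, List.map_cons]

/-- `l` lists every element of `ι` exactly once. -/
def IsEnumeration (l : List ι) : Prop :=
  l.Nodup ∧ ∀ k, k ∈ l

lemma IsEnumeration.of_perm {l l' : List ι} (hl : IsEnumeration l) (h : l.Perm l') :
    IsEnumeration l' :=
  ⟨h.nodup_iff.1 hl.1, fun k => h.mem_iff.1 (hl.2 k)⟩

lemma IsEnumeration.length_eq [Fintype ι] {l : List ι} (hl : IsEnumeration l) :
    l.length = Fintype.card ι := by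
  classical
  rw [← List.toFinset_card_of_nodup hl.1, Finset.card_eq_iff_eq_univ,
    Finset.eq_univ_iff_forall]
  exact fun k => List.mem_toFinset.2 (hl.2 k)

variable (ι) in
/-- The span of the linear trees whose leaves are labelled bijectively by `ι`. -/
def treeSpan : Submodule ℚ ((ι → sl2) → ℚ) :=
  Submodule.span ℚ (linTree '' {l | IsEnumeration l})

lemma linTree_mem_treeSpan {l : List ι} (hl : IsEnumeration l) : linTree l ∈ treeSpan ι :=
  Submodule.subset_span ⟨l, hl, rfl⟩

section Invariance

variable [DecidableEq ι]

lemma sum_lBrk_update {l : List ι} (hl : l.Nodup) (a : sl2) (x : ι → sl2) :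
    ∑ k ∈ l.toFinset, lBrk (l.map (Function.update x k ⁅a, x k⁆)) = ⁅a, lBrk (l.map x)⁆ := by
  induction l using List.reverseRecOn with
  | nil => simp [lBrk]
  | append_singleton l m ih =>
    rcases eq_or_ne l [] with rfl | hne
    · simp [lBrk]
    have hm : m ∉ l := by grind
    have hmap (z : sl2) : l.map (Function.update x m z) = l.map x :=
      List.map_congr_left fun k hk => Function.update_of_ne (ne_of_mem_of_not_mem hk hm) _ _
    have hterm : ∀ k ∈ l.toFinset, lBrk ((l ++ [m]).map (Function.update x k ⁅a, x k⁆)) =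
        ⁅lBrk (l.map (Function.update x k ⁅a, x k⁆)), x m⁆ := by
      intro k hk
      rw [List.map_append, List.map_singleton, lBrk_concat (by simpa using hne),
        Function.update_of_ne (ne_of_mem_of_not_mem (List.mem_toFinset.1 hk) hm).symm]
    rw [List.toFinset_append, List.toFinset_cons, List.toFinset_nil, insert_empty_eq,
      Finset.union_comm, ← Finset.insert_eq, Finset.sum_insert (by simpa using hm),
      Finset.sum_congr rfl hterm, ← sum_lie, ih hl.of_append_left]
    simp only [List.map_append, List.map_singleton, hmap, Function.update_self]
    rw [lBrk_concat (by simpa using hne), lBrk_concat (by simpa using hne), leibniz_lie a, add_comm]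

lemma sum_linTree_update [Fintype ι] {l : List ι} (hl : IsEnumeration l) (a : sl2) (x : ι → sl2) :
    ∑ k, linTree l (Function.update x k ⁅a, x k⁆) = 0 := by
  obtain ⟨hnodup, hmem⟩ := hl
  rcases List.eq_nil_or_concat' l with rfl | ⟨l, m, rfl⟩
  · simp [linTree]
  have hm : m ∉ l := by grind
  have hmap (z : sl2) : l.map (Function.update x m z) = l.map x :=
    List.map_congr_left fun k hk => Function.update_of_ne (ne_of_mem_of_not_mem hk hm) _ _
  have huniv : Finset.univ.erase m = l.toFinset := by
    ext k
    have := hmem k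
    grind [List.mem_toFinset]
  have hterm : ∀ k ∈ l.toFinset, linTree (l ++ [m]) (Function.update x k ⁅a, x k⁆) =
      traceForm (lBrk (l.map (Function.update x k ⁅a, x k⁆))) (x m) := by
    intro k hk
    rw [linTree_concat,
      Function.update_of_ne (ne_of_mem_of_not_mem (List.mem_toFinset.1 hk) hm).symm]
  rw [← Finset.add_sum_erase _ _ (Finset.mem_univ m), huniv, Finset.sum_congr rfl hterm,
    ← LinearMap.sum_apply, ← map_sum, sum_lBrk_update hnodup.of_append_left, linTree_concat, hmap,
    Function.update_self, traceForm_lie_left, add_neg_cancel]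

end Invariance

section Merge

lemma traceForm_mul_linTree (x : ι → sl2) (i j p q m : ι) (c : List ι) :
    traceForm (x i) (x j) * linTree (p :: q :: c ++ [m]) x = 1 / 4 *
      (linTree (p :: i :: j :: q :: c ++ [m]) x + linTree (p :: j :: i :: q :: c ++ [m]) x +
        linTree (p :: q :: i :: j :: c ++ [m]) x + linTree (p :: q :: j :: i :: c ++ [m]) x -
        linTree (p :: i :: q :: j :: c ++ [m]) x - linTree (p :: j :: q :: i :: c ++ [m]) x) := by
  have hiter (y z : sl2) (c : List sl2) : iterLie (z :: c) y = iterLie c ⁅y, z⁆ := by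
    rw [iterLie_apply, iterLie_apply]
    rfl
  have h := congr(traceForm (iterLie (c.map x) $(traceForm_smul_lie (x i) (x j) (x p) (x q))) (x m))
  simpa only [linTree_cons_concat, List.map_cons, hiter, map_add, map_sub, map_smul,
    LinearMap.add_apply, LinearMap.sub_apply, LinearMap.smul_apply, smul_eq_mul] using h

variable {i j : ι}

lemma traceForm_mul_linTree_mem_treeSpan [Fintype ι] (hodd : Odd (Fintype.card ι)) {l : List ι}
    (hl : IsEnumeration (i :: j :: l)) :
    (fun x => traceForm (x i) (x j) * linTree l x) ∈ treeSpan ι := by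
  classical
  rw [← hl.length_eq] at hodd
  match l with
  | [] | [_, _] => simp [Nat.odd_iff] at hodd
  | [p] =>
    have hzero : (fun x => traceForm (x i) (x j) * linTree [p] x) = 0 := by
      ext x
      simp [linTree, lBrk]
    exact hzero ▸ (treeSpan ι).zero_mem
  | p :: q :: r :: s =>
    obtain ⟨c, m, hcm⟩ := (List.eq_nil_or_concat' (r :: s)).resolve_left (List.cons_ne_nil r s)
    rw [hcm] at hl ⊢
    have hmem {l' : List ι} (h : (i :: j :: p :: q :: (c ++ [m])).Perm l') :
        linTree l' ∈ treeSpan ι :=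
      linTree_mem_treeSpan (hl.of_perm h)
    have hmerge := funext fun x => traceForm_mul_linTree x i j p q m c
    rw [List.cons_append, List.cons_append] at hmerge
    rw [hmerge]
    refine (treeSpan ι).smul_mem (1 / 4) ?_
    refine sub_mem (sub_mem (add_mem (add_mem (add_mem ?_ ?_) ?_) ?_) ?_) ?_ <;>
      exact hmem (List.perm_iff_count.2 fun k => by
        simp only [List.count_cons, List.cons_append, List.count_append]
        ring)

lemma linTree_map {ι' : Type*} (φ : ι' → ι) (l : List ι') (x : ι → sl2) :
    linTree (l.map φ) x = linTree l (x ∘ φ) := by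
  rw [linTree, List.map_map, linTree]

lemma IsEnumeration.cons_cons_map_val (hij : i ≠ j) {l : List {k // k ≠ i ∧ k ≠ j}}
    (hl : IsEnumeration l) : IsEnumeration (i :: j :: l.map Subtype.val) := by
  refine ⟨?_, fun k => ?_⟩
  · have := hl.1.map Subtype.val_injective
    grind
  · by_cases hk : k ≠ i ∧ k ≠ j
    · exact .tail _ (.tail _ (List.mem_map.2 ⟨⟨k, hk⟩, hl.2 _, rfl⟩))
    · grind

theorem traceForm_mul_mem_treeSpan [Fintype ι] (hij : i ≠ j) (hodd : Odd (Fintype.card ι))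
    {g : ({k // k ≠ i ∧ k ≠ j} → sl2) → ℚ} (hg : g ∈ treeSpan {k // k ≠ i ∧ k ≠ j}) :
    (fun x : ι → sl2 => traceForm (x i) (x j) * g (fun k => x k)) ∈ treeSpan ι := by
  let Ψ : (({k // k ≠ i ∧ k ≠ j} → sl2) → ℚ) →ₗ[ℚ] (ι → sl2) → ℚ :=
    LinearMap.pi fun x => traceForm (x i) (x j) • LinearMap.proj (x ∘ Subtype.val)
  suffices h : treeSpan {k // k ≠ i ∧ k ≠ j} ≤ (treeSpan ι).comap Ψ from h hg
  rw [treeSpan, Submodule.span_le, Set.image_subset_iff]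
  intro l hl
  have hmem := traceForm_mul_linTree_mem_treeSpan hodd (hl.cons_cons_map_val hij)
  simp only [linTree_map] at hmem
  exact hmem

end Merge

end LinearTrees

section InvariantFormsAreTrees

variable (ι : Type*)

/-- The multilinear forms that are linear combinations of linear trees. -/
def treeForms : Submodule ℚ (MultilinearMap ℚ (fun _ : ι => sl2) ℚ) where
  carrier := {f | ⇑f ∈ treeSpan ι}
  zero_mem' := (treeSpan ι).zero_mem
  add_mem' hf hg := (treeSpan ι).add_mem hf hg
  smul_mem' c _ hf := (treeSpan ι).smul_mem c hf

variable {ι} {f : MultilinearMap ℚ (fun _ : ι => sl2) ℚ}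

lemma mem_treeForms : f ∈ treeForms ι ↔ ⇑f ∈ treeSpan ι :=
  Iff.rfl

variable [Fintype ι] [DecidableEq ι]

lemma two_smul_add_sum_swap_mem_treeForms (hf : f ∈ invariantForms ℚ ι sl2) (j : ι)
    (hcontr : ∀ k, k ≠ j →
      (fun x => traceForm (x k) (x j) * contraction f k j (fun l => x l)) ∈ treeSpan ι) :
    (2 : ℚ) • f + ∑ k ∈ Finset.univ.erase j, formPerm ℚ ι sl2 (Equiv.swap j k) f ∈
      treeForms ι := by
  have hcoe : ⇑((2 : ℚ) • f + ∑ k ∈ Finset.univ.erase j, formPerm ℚ ι sl2 (Equiv.swap j k) f) =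
      ∑ k ∈ Finset.univ.erase j, fun x => traceForm (x k) (x j) *
        contraction f k j (fun l => x l) := by
    ext x
    rw [Finset.sum_apply, ← two_mul_add_sum_comp_swap hf j x]
    simp only [add_apply, smul_apply, sum_apply, formPerm_apply, smul_eq_mul]
  rw [mem_treeForms, hcoe]
  exact (treeSpan ι).sum_mem fun k hk => hcontr k (Finset.ne_of_mem_erase hk)

lemma traceForm_lie_eq_det (y : Fin 3 → sl2) :
    traceForm ⁅y 0, y 1⁆ (y 2) = -2 * sl2Basis.det y := by
  simp only [Module.Basis.det_apply, Matrix.det_fin_three, Module.Basis.toMatrix_apply,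
    ← Module.Basis.equivFun_apply, sl2Basis_equivFun, traceForm_apply, lie_apply_zero_one,
    lie_apply_zero_zero, lie_apply_one_zero, Matrix.cons_val]
  ring

lemma AntisymmOn.mem_treeForms_of_card_eq_three (hcard : Fintype.card ι = 3)
    (hf : AntisymmOn (formPerm ℚ ι sl2) Finset.univ f) : f ∈ treeForms ι := by
  let ε : Fin 3 ≃ ι := (Fintype.equivFinOfCardEq hcard).symm
  let g : sl2 [⋀^ι]→ₗ[ℚ] ℚ :=
    { f with
      map_eq_zero_of_eq' := fun _ i j hx hij =>
        hf.apply_eq_zero_of_eq (Finset.mem_univ i) (Finset.mem_univ j) hij hx }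
  have hl : IsEnumeration [ε 0, ε 1, ε 2] := by
    refine ⟨by simp, fun k => ?_⟩
    obtain ⟨b, rfl⟩ := ε.surjective k
    fin_cases b <;> simp
  have hfl : ⇑f = (-(1 / 2) * g (sl2Basis.reindex ε)) • linTree [ε 0, ε 1, ε 2] := by
    ext x
    have hdet : f x = g (sl2Basis.reindex ε) * sl2Basis.det (x ∘ ε) := by
      rw [← Module.Basis.det_reindex]
      exact congr($(g.eq_smul_basis_det (sl2Basis.reindex ε)) x)
    have htree : linTree [ε 0, ε 1, ε 2] x = -2 * sl2Basis.det (x ∘ ε) :=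
      traceForm_lie_eq_det (x ∘ ε)
    rw [hdet, Pi.smul_apply, htree, smul_eq_mul]
    ring
  rw [mem_treeForms, hfl]
  exact (treeSpan ι).smul_mem _ (linTree_mem_treeSpan hl)

theorem invariantForms_le_treeForms_of_contraction [Nonempty ι]
    (hcontr : ∀ f ∈ invariantForms ℚ ι sl2, ∀ k j, k ≠ j →
      (fun x => traceForm (x k) (x j) * contraction f k j (fun l => x l)) ∈ treeSpan ι) :
    invariantForms ℚ ι sl2 ≤ treeForms ι := by
  have hP : ∀ σ, ∀ p ∈ invariantForms ℚ ι sl2, formPerm ℚ ι sl2 σ p ∈ invariantForms ℚ ι sl2 :=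
    fun σ p hp => formPerm_mem_invariantForms σ hp
  have hcas : ∀ p ∈ invariantForms ℚ ι sl2, ∀ j, (2 : ℚ) • p +
      ∑ k ∈ Finset.univ.erase j, formPerm ℚ ι sl2 (Equiv.swap j k) p ∈ treeForms ι :=
    fun p hp j => two_smul_add_sum_swap_mem_treeForms hp j fun k => hcontr p hp k j
  refine le_of_antisymmOn_card_three_mem hP hcas fun S hS p hp hpS => ?_
  by_cases hcard : Fintype.card ι = 3
  · obtain rfl : S = Finset.univ := (Finset.card_eq_iff_eq_univ S).1 (hS.trans hcard.symm)
    exact hpS.mem_treeForms_of_card_eq_three hcard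
  · refine hpS.mem_of_insert hP hcas (fun j hj q _ hq => ?_) ?_ hp
    · rw [hq.eq_zero_of_finrank_lt]
      · exact zero_mem _
      · rw [Module.finrank_eq_card_basis sl2Basis, Fintype.card_fin,
          Finset.card_insert_of_notMem hj, hS]
        norm_num
    · rw [hS]
      have hcard' : (Fintype.card ι : ℚ) ≠ 3 := by exact_mod_cast hcard
      contrapose! hcard'
      push_cast at hcard'
      linarith

lemma traceForm_mul_contraction_mem_treeSpan_of_card_eq_two (hcard : Fintype.card ι = 2) {k j : ι}
    (hkj : k ≠ j) :
    (fun x => traceForm (x k) (x j) * contraction f k j (fun l => x l)) ∈ treeSpan ι := by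
  have huniv : Finset.univ = ({k, j} : Finset ι) :=
    ((Finset.card_eq_iff_eq_univ _).1 ((Finset.card_pair hkj).trans hcard.symm)).symm
  have hpair (l : ι) : l = k ∨ l = j := by
    have := Finset.mem_univ l
    simpa [huniv] using this
  have : IsEmpty {l // l ≠ k ∧ l ≠ j} :=
    ⟨fun l => (hpair l).elim l.2.1 l.2.2⟩
  have htree : (fun x => traceForm (x k) (x j) * contraction f k j (fun l => x l)) =
      contraction f k j 0 • linTree [k, j] := by
    ext x
    rw [Subsingleton.elim (fun l : {l // l ≠ k ∧ l ≠ j} => x l) 0, mul_comm]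
    rfl
  rw [htree]
  exact (treeSpan ι).smul_mem _ (linTree_mem_treeSpan ⟨by simpa using hkj, by simpa using hpair⟩)

lemma card_subtype_ne_and_ne {i j : ι} (hij : i ≠ j) :
    Fintype.card {k // k ≠ i ∧ k ≠ j} + 2 = Fintype.card ι := by
  simpa [add_comm] using (sum_eq_add_add_sum_subtype hij fun _ => (1 : ℕ)).symm

theorem invariantForms_le_treeForms (hcard : Odd (Fintype.card ι) ∨ Fintype.card ι = 2) :
    invariantForms ℚ ι sl2 ≤ treeForms ι := by
  induction hn : Fintype.card ι using Nat.strong_induction_on generalizing ι with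
  | _ n ih =>
    have : Nonempty ι := Fintype.card_pos_iff.1 (by grind)
    refine invariantForms_le_treeForms_of_contraction fun f hf k j hkj => ?_
    rcases hcard with hodd | htwo
    · have hcard := card_subtype_ne_and_ne hkj
      refine traceForm_mul_mem_treeSpan hkj hodd ?_
      exact ih _ (by lia) (.inl (by grind)) rfl (contraction_mem_invariantForms hf hkj)
    · exact traceForm_mul_contraction_mem_treeSpan_of_card_eq_two htwo hkj

lemma treeForms_le_invariantForms : treeForms ι ≤ invariantForms ℚ ι sl2 := by
  intro f hf a x
  let δ : ((ι → sl2) → ℚ) →ₗ[ℚ] ℚ :=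
    ∑ k, LinearMap.proj (Function.update x k ⁅a, x k⁆)
  have hδ (g : (ι → sl2) → ℚ) : δ g = ∑ k, g (Function.update x k ⁅a, x k⁆) :=
    LinearMap.sum_apply _ _ _
  have hker : treeSpan ι ≤ LinearMap.ker δ := by
    rw [treeSpan, Submodule.span_le, Set.image_subset_iff]
    exact fun l hl => (hδ _).trans (sum_linTree_update hl a x)
  exact (hδ f).symm.trans (hker hf)

theorem treeForms_eq_invariantForms (hcard : Odd (Fintype.card ι) ∨ Fintype.card ι = 2) :
    treeForms ι = invariantForms ℚ ι sl2 :=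
  treeForms_le_invariantForms.antisymm (invariantForms_le_treeForms hcard)

end InvariantFormsAreTrees

section Tensors

variable {n : ℕ}

lemma pairT_tprod (κ : sl2 →ₗ[ℚ] sl2 →ₗ[ℚ] ℚ) (x a : Fin n → sl2) :
    pairT κ n x (PiTensorProduct.tprod ℚ a) = ∏ i, κ (a i) (x i) := by
  simp [pairT]

lemma pairT_update_add (κ : sl2 →ₗ[ℚ] sl2 →ₗ[ℚ] ℚ) (x : Fin n → sl2) (i : Fin n) (u v : sl2) :
    pairT κ n (Function.update x i (u + v)) =
      pairT κ n (Function.update x i u) + pairT κ n (Function.update x i v) := by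
  ext a
  simp only [LinearMap.compMultilinearMap_apply, LinearMap.add_apply, pairT_tprod]
  exact MultilinearMap.map_update_add
    ((MultilinearMap.mkPiAlgebra ℚ (Fin n) ℚ).compLinearMap fun k => κ (a k)) x i u v

lemma pairT_update_smul (κ : sl2 →ₗ[ℚ] sl2 →ₗ[ℚ] ℚ) (x : Fin n → sl2) (i : Fin n) (c : ℚ)
    (u : sl2) :
    pairT κ n (Function.update x i (c • u)) = c • pairT κ n (Function.update x i u) := by
  ext a
  simp only [LinearMap.compMultilinearMap_apply, LinearMap.smul_apply, pairT_tprod]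
  exact MultilinearMap.map_update_smul
    ((MultilinearMap.mkPiAlgebra ℚ (Fin n) ℚ).compLinearMap fun k => κ (a k)) x i c u

variable (n) in
/-- The multilinear form `x ↦ κ^{⊗n}(T, x₁ ⊗ ⋯ ⊗ xₙ)` attached to a tensor `T` by the trace
form `κ`. -/
def tensorForm : TP n →ₗ[ℚ] MultilinearMap ℚ (fun _ : Fin n => sl2) ℚ where
  toFun T :=
    { toFun := fun x => pairT traceForm n x T
      map_update_add' := fun {inst} x i u v => by
        rw [Subsingleton.elim inst, pairT_update_add, LinearMap.add_apply]
      map_update_smul' := fun {inst} x i c u => by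
        rw [Subsingleton.elim inst, pairT_update_smul, LinearMap.smul_apply] }
  map_add' S T := by ext x; exact map_add (pairT traceForm n x) S T
  map_smul' c T := by ext x; exact map_smul (pairT traceForm n x) c T

lemma tensorForm_apply (T : TP n) (x : Fin n → sl2) :
    tensorForm n T x = pairT traceForm n x T :=
  rfl

lemma piTensorProduct_repr_eq_pairT (T : TP n) (p : Fin n → Fin 3) :
    (Basis.piTensorProduct fun _ : Fin n => sl2Basis).repr T p =
      pairT traceForm n (sl2DualBasis ∘ p) T := by
  suffices h : (Basis.piTensorProduct fun _ : Fin n => sl2Basis).coord p =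
      pairT traceForm n (sl2DualBasis ∘ p) from congr($h T)
  ext a
  simp [pairT_tprod, traceForm_sl2DualBasis, Basis.piTensorProduct_repr_tprod_apply]

lemma tensorForm_injective : Function.Injective (tensorForm n) := by
  intro S T h
  refine (Basis.piTensorProduct fun _ : Fin n => sl2Basis).ext_elem fun p => ?_
  rw [piTensorProduct_repr_eq_pairT, piTensorProduct_repr_eq_pairT]
  exact congr($h _)

lemma tensorForm_actOn (a : sl2) (T : TP n) (x : Fin n → sl2) :
    tensorForm n (actOn n a T) x = -∑ k, tensorForm n T (Function.update x k ⁅a, x k⁆) := by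
  suffices h : pairT traceForm n x ∘ₗ actOn n a =
      -∑ k, pairT traceForm n (Function.update x k ⁅a, x k⁆) by
    simpa [tensorForm_apply] using congr($h T)
  ext b
  have hterm (k : Fin n) : (∏ i, traceForm ((if i = k then LieAlgebra.ad ℚ sl2 a else
      LinearMap.id) (b i)) (x i)) = -∏ i, traceForm (b i) (Function.update x k ⁅a, x k⁆ i) := by
    rw [← Finset.mul_prod_erase _ _ (Finset.mem_univ k),
      ← Finset.mul_prod_erase _ _ (Finset.mem_univ k), if_pos rfl, Function.update_self,
      LieAlgebra.ad_apply, traceForm_lie_left, neg_mul]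
    congr 2
    refine Finset.prod_congr rfl fun i hi => ?_
    have hik := Finset.ne_of_mem_erase hi
    rw [if_neg hik, Function.update_of_ne hik, LinearMap.id_apply]
  simp [actOn, PiTensorProduct.map_tprod, pairT_tprod, hterm]

lemma comap_tensorForm_invariantForms :
    (invariantForms ℚ (Fin n) sl2).comap (tensorForm n) = Invariants n := by
  ext T
  have hmem : T ∈ Invariants n ↔ ∀ a, actOn n a T = 0 := by
    simp [Invariants, Submodule.mem_iInf]
  rw [hmem, Submodule.mem_comap]
  refine forall_congr' fun a => ?_
  rw [← (tensorForm n).map_eq_zero_iff tensorForm_injective, MultilinearMap.ext_iff]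
  simp only [tensorForm_actOn, zero_apply, neg_eq_zero]

lemma brkVal_comp (x : Fin n → sl2) (σ : Equiv.Perm (Fin n)) :
    brkVal traceForm (x ∘ σ) = linTree (List.ofFn σ) x := by
  rw [brkVal, linTree, List.map_ofFn]

lemma setOf_isEnumeration :
    {l : List (Fin n) | IsEnumeration l} = Set.range fun σ : Equiv.Perm (Fin n) => List.ofFn σ := by
  ext l
  constructor
  · intro hl
    have hlen : l.length = n := by simpa using hl.length_eq
    refine ⟨(finCongr hlen.symm).trans (hl.1.getEquivOfForallMemList l hl.2), ?_⟩
    refine List.ext_getElem (by simp [hlen]) fun i _ _ => ?_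
    simp
  · rintro ⟨σ, rfl⟩
    exact ⟨List.nodup_ofFn.2 σ.injective, fun k => List.mem_ofFn.2 (σ.surjective k)⟩

lemma span_range_eq_comap_treeForms {t : Equiv.Perm (Fin n) → TP n}
    (ht : ∀ σ x, pairT traceForm n x (t σ) = brkVal traceForm (x ∘ σ)) :
    Submodule.span ℚ (Set.range t) = (treeForms (Fin n)).comap (tensorForm n) := by
  let Φ : TP n →ₗ[ℚ] (Fin n → sl2) → ℚ := LinearMap.pi (pairT traceForm n)
  have hΦ : Function.Injective Φ := fun S T h =>
    tensorForm_injective (MultilinearMap.ext (congrFun h))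
  have himage : Φ '' Set.range t = linTree '' {l | IsEnumeration l} := by
    have hΦt : Φ ∘ t = fun σ : Equiv.Perm (Fin n) => linTree (List.ofFn σ) := by
      ext σ x
      exact (ht σ x).trans (brkVal_comp x σ)
    rw [← Set.range_comp, hΦt, setOf_isEnumeration, ← Set.range_comp]
    rfl
  calc Submodule.span ℚ (Set.range t)
      = ((Submodule.span ℚ (Set.range t)).map Φ).comap Φ :=
        (Submodule.comap_map_eq_of_injective hΦ _).symm
    _ = (treeSpan (Fin n)).comap Φ := by rw [Submodule.map_span, himage, treeSpan]
    _ = (treeForms (Fin n)).comap (tensorForm n) := rfl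

end Tensors

theorem span_linear_tree_tensors_eq_invariants_of_odd_or_two
    (κ : sl2 →ₗ[ℚ] sl2 →ₗ[ℚ] ℚ)
    (hHH : κ H H = 2) (hEF : κ E F = 1) (hFE : κ F E = 1)
    (hHE : κ H E = 0) (hEH : κ E H = 0) (hHF : κ H F = 0) (hFH : κ F H = 0)
    (hEE : κ E E = 0) (hFF : κ F F = 0) :
    ∀ n, (n = 2 ∨ (3 ≤ n ∧ Odd n)) →
    ∀ t : Equiv.Perm (Fin n) → TP n,
      (∀ σ (x : Fin n → sl2), pairT κ n x (t σ) = brkVal κ (x ∘ σ)) →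
      Submodule.span ℚ (Set.range t) = Invariants n := by
  obtain rfl := eq_traceForm hHH hEF hFE hHE hEH hHF hFH hEE hFF
  intro n hn t ht
  have hcard : Odd (Fintype.card (Fin n)) ∨ Fintype.card (Fin n) = 2 := by
    rw [Fintype.card_fin]
    exact hn.symm.imp_left And.right
  rw [span_range_eq_comap_treeForms ht, treeForms_eq_invariantForms hcard,
    comap_tensorForm_invariantForms]
end
end
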